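/- There exist a finite alphabet α, a state B ∈ α, and a cellular automaton Φ : α^ℤ → α^ℤ with quiescent state B such that Φ is uniquely ergodic and asymptotically nilpotent in density, but not nilpotent. -/

import Mathlib

open MeasureTheory Filter

/-- The Besicovitch pseudometric on `α^ℤ`:
`d_B(x,y) = limsup_{n→∞} |{i ∈ [-n,n] : x_i ≠ y_i}| / (2n+1)`. -/
noncomputable def besicovitchDist {α : Type} [DecidableEq α] (x y : ℤ → α) : ℝ :=
  Filter.limsup (fun n : ℕ =>
      (((Finset.Icc (-(n : ℤ)) (n : ℤ)).filter fun i => x i ≠ y i).card : ℝ) /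
        (2 * (n : ℝ) + 1))
    Filter.atTop

/-! The automaton simulates itself: a macro-cell of `7000` cells, in a period of `49023` steps,
performs one step of a single cell of the same automaton. Every cell which is not blank knows its
place and age in its macro-cell, and it can only survive as part of one of the `56` signals of a
macro-cell with a complete simulated cell, or a neighbour with one. This holds in turn for the
simulated configuration, so, after `4 * 49023 ^ N` steps, every surviving cell is owned by
macro-cells of all levels up to `N`.

An owner at level `n + 1` has, in a row, at most `2352 = 6 * 56 * 7` cells of level `n`, while a
bouncing signal keeps the macro-cells of one level from overlapping. Hence the surviving cells have
density at most of order `(2352 / 7000) ^ N`. All signals are slow, so that after composition with a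
fast shift the same count bounds the frequency of the times at which a given cell is not blank;
consequently an invariant measure is concentrated on the blank configuration.

Conversely, encoding a configuration which survives `T` steps without conflicts gives one which
survives `49023 * T + 1` steps without conflicts, so the automaton is not nilpotent. -/

namespace SelfSimulation

/-! ### Geometry of the signals -/

/-- The displacements of the seven lanes. Along lanes `0`–`4` a macro-cell pushes its datum to
the macro-cell `disp l` places to the right; lanes `5` and `6` deliver the left and the right
operand of a gate, the left operand standing seven places to the left of the right one. -/
def disp (l : Fin 7) : ℤ := ![0, 1, -1, 7, -7, 7, 0] l

theorem disp_bounds (l : Fin 7) : -7 ≤ disp l ∧ disp l ≤ 7 := by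
  fin_cases l <;> simp [disp]

@[simp] theorem disp_zero : disp 0 = 0 := rfl

/-- The distance, in units of seven cells, flown along lane `l` during the first `j` steps. The
flight has length `7000 * disp l` and lasts at most `7000` steps. -/
def flight (l : Fin 7) (j : ℕ) : ℤ := max (-(j : ℤ)) (min (j : ℤ) (1000 * disp l))

theorem flight_zero (l : Fin 7) : flight l 0 = 0 := by
  simp [flight]

theorem flight_of_le {l : Fin 7} {j : ℕ} (hj : 7000 ≤ j) : flight l j = 1000 * disp l := by
  have := disp_bounds l
  unfold flight; omega

theorem abs_flight_le (l : Fin 7) (j : ℕ) : |flight l j| ≤ 7000 := by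
  have := disp_bounds l
  rw [abs_le]; unfold flight; omega

theorem flight_step (l : Fin 7) (j : ℕ) : |flight l (j + 1) - flight l j| ≤ 1 := by
  rw [abs_le]; unfold flight; push_cast; omega

/-- The place at time `t` of lane `l`, on which a datum leaves its macro-cell: from time `3` the
lanes fan out to the places `0`–`6`, from time `9` they fly in steps of `7`. -/
def lane (l : Fin 7) (t : ℕ) : ℤ := min (l : ℤ) (t - 3 : ℕ) + 7 * flight l (t - 9)

theorem lane_of_le {l : Fin 7} {t : ℕ} (ht : t ≤ 9) : lane l t = min (l : ℤ) (t - 3 : ℕ) := by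
  rw [lane, Nat.sub_eq_zero_of_le ht, flight_zero, mul_zero, add_zero]

theorem lane_of_ge {l : Fin 7} {t : ℕ} (ht : 7009 ≤ t) : lane l t = l + 7000 * disp l := by
  rw [lane, flight_of_le (by omega)]; omega

theorem lane_bounds (l : Fin 7) (t : ℕ) : -49000 ≤ lane l t ∧ lane l t ≤ 49006 := by
  have := abs_le.1 (abs_flight_le l (t - 9))
  unfold lane; omega

theorem lane_step (l : Fin 7) (t : ℕ) : |lane l (t + 1) - lane l t| ≤ 7 := by
  rcases lt_or_ge t 9 with ht | ht
  · rw [lane_of_le ht.le, lane_of_le ht, abs_le]; omega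
  · have := abs_le.1 (flight_step l (t - 9))
    rw [abs_le, lane, lane, Nat.sub_add_comm ht]; omega

theorem lane_separation (l l' : Fin 7) (t : ℕ) (J : ℤ) :
    (lane l t = lane l' t + 7000 * J → J = 0) ∧ lane l t ≠ lane l' t + 7000 * J + 7 := by
  rcases le_or_gt t 9 with ht | ht
  · rw [lane_of_le ht, lane_of_le ht]; omega
  · have hl : ((t - 3 : ℕ) : ℤ) = t - 3 := by omega
    rw [lane, lane, hl]
    obtain rfl | hne := eq_or_ne l l' <;> omega

/-- The place at step `j` of a signal that bounces between the places `1` and `6999` of a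
macro-cell, starting from the place `7` to the right. -/
def zigzag (j : ℕ) : ℤ :=
  max (((j : ℤ) + 7004) % 13996 - 6997) (6999 - ((j : ℤ) + 7004) % 13996)

theorem zigzag_bounds (j : ℕ) : 1 ≤ zigzag j ∧ zigzag j ≤ 6999 := by
  unfold zigzag; omega

theorem zigzag_zero : zigzag 0 = 7 := rfl

theorem zigzag_step (j : ℕ) : |zigzag (j + 1) - zigzag j| ≤ 1 := by
  rw [abs_le]; unfold zigzag; push_cast; omega

/-- The place at time `t` of the outcome of lane `l`: the outcome of lane `5` is moved to the left
of the outcome of lane `6`, with which it is combined at time `7027`; then the outcomes gather at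
place `14`, and they start bouncing at time `7035`. -/
def gather (l : Fin 7) (t : ℕ) : ℤ :=
  if 7035 ≤ t then zigzag (t - 7035)
  else if l.val = 5 ∧ 7026 ≤ t then min ((t : ℤ) - 7014) 13
  else 14 + max 0 (min (l : ℤ) (7028 + l - t))

theorem gather_of_ge {l : Fin 7} {t : ℕ} (ht : 7035 ≤ t) : gather l t = zigzag (t - 7035) :=
  if_pos ht

theorem gather_of_ne_five {l : Fin 7} {t : ℕ} (hl : l.val ≠ 5) (ht : t < 7035) :
    gather l t = 14 + max 0 (min (l : ℤ) (7028 + l - t)) := by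
  rw [gather, if_neg ht.not_ge, if_neg fun h ↦ hl h.1]

theorem gather_bounds (l : Fin 7) (t : ℕ) : 1 ≤ gather l t ∧ gather l t ≤ 6999 := by
  have hz := zigzag_bounds (t - 7035)
  unfold gather; split_ifs <;> omega

theorem gather_le {l : Fin 7} {t : ℕ} (ht : t < 7035) : gather l t ≤ 20 := by
  unfold gather; split_ifs <;> omega

theorem gather_step (l : Fin 7) (t : ℕ) : |gather l (t + 1) - gather l t| ≤ 7 := by
  rw [abs_le]
  rcases lt_or_ge t 7035 with ht | ht
  · have hz : zigzag (t + 1 - 7035) = 7 := by rw [Nat.sub_eq_zero_of_le ht, zigzag_zero]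
    unfold gather; split_ifs <;> omega
  · have hz := abs_le.1 (zigzag_step (t - 7035))
    rw [gather_of_ge ht, gather_of_ge (by omega), Nat.sub_add_comm ht]; omega

theorem gather_merge {l l' : Fin 7} {t : ℕ} {J K : ℤ} (hne : l ≠ l') (ht : 7025 ≤ t)
    (hl : t < 7028 ∨ l.val ≠ 5 ∧ l'.val ≠ 5) (h : 7000 * J + gather l t = 7000 * K + gather l' t) :
    J = K ∧ 7028 ≤ t ∧ gather l (t + 1) = gather l' (t + 1) := by
  have hne' : l.val ≠ l'.val := Fin.val_ne_of_ne hne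
  have hb := gather_bounds l t
  have hb' := gather_bounds l' t
  rcases lt_or_ge t 7028 with ht' | ht'
  · simp only [gather, show ¬ 7035 ≤ t by omega, if_false] at h
    split_ifs at h <;> omega
  · obtain ⟨hl, hl'⟩ := hl.resolve_left ht'.not_gt
    refine ⟨by omega, ht', ?_⟩
    obtain rfl : J = K := by omega
    rcases le_or_gt 7034 t with ht | ht
    · rw [gather_of_ge (by omega), gather_of_ge (by omega)]
    · rw [gather_of_ne_five hl (by omega), gather_of_ne_five hl' (by omega)] at h ⊢
      push_cast; omega

/-- The signals which a macro-cell (of width `7000` and period `49023`) uses to simulate one cell.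
* `rawAddr`, `rawDatum` carry the slot and the datum of the simulated cell, `keepSig`,
  `plainAddr` and `starSig` verify that both are present;
* `addr l`, `datum l` carry slot and datum to the target macro-cell of lane `l`;
* `incr l` is the slot updated according to lane `l`; the `incr l` merge into `key`, the slot of
  the simulated successor, which `home` keeps until the end of the period;
* `query l` asks whether `key` came along lane `l`, `exec l` applies the program at the slot
  received along lane `l`, and `result l` carries the outcome; `joined` is the gate applied to the
  outcomes of lanes `5` and `6`. -/
inductive Wire
  | rawAddr | rawDatum | keepSig | plainAddr | starSig
  | addr (l : Fin 7) | datum (l : Fin 7) | incr (l : Fin 7) | key (l : Fin 7)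
  | home | query (l : Fin 7) | exec (l : Fin 7) | result (l : Fin 7) | joined
  deriving DecidableEq, Fintype

namespace Wire

/-- The first time at which a signal exists. -/
def birth : Wire → ℕ
  | rawAddr | rawDatum => 0
  | keepSig | plainAddr | starSig => 1
  | addr _ | datum _ => 2
  | incr _ => 7010
  | key _ => 7016
  | home | query _ => 7023
  | exec _ => 7024
  | result _ => 7025
  | joined => 7028

/-- The last time at which a signal exists. -/
def death : Wire → ℕ
  | rawAddr => 0
  | rawDatum | keepSig | plainAddr | starSig => 1
  | addr _ => 7023
  | datum _ => 7024
  | incr _ => 7015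
  | key _ => 7022
  | home => 49023
  | query _ => 7023
  | exec _ => 7024
  | result l => if l.val < 5 then 49023 else 7027
  | joined => 49023

/-- The place of a signal in its macro-cell. Signals `addr l` and `datum l` are counted from their
source macro-cell, all others from the macro-cell they serve. The value is meaningful from `birth`
to `death`. -/
def pos (w : Wire) (t : ℕ) : ℤ :=
  match w with
  | rawAddr => 0
  | rawDatum => 7
  | keepSig => 0
  | plainAddr => 1
  | starSig => 8
  | addr l => if t = 2 then 8 else 7 + lane l t
  | datum l => if t = 2 then 7 else 14 + lane l t
  | incr l => max 0 (min (l : ℤ) (7010 + l - t))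
  | key l => max 0 (min (l : ℤ) (t - 7016))
  | home => if t < 7035 then -7 else 0
  | query l => l
  | exec l => 7 + l
  | result l => gather l t
  | joined => gather 6 t

/-- The signal exists at time `t`. -/
def Alive (w : Wire) (t : ℕ) : Prop := w.birth ≤ t ∧ t ≤ w.death

theorem card_eq : Fintype.card Wire = 56 := rfl

theorem abs_pos_le (w : Wire) (t : ℕ) : |w.pos t| ≤ 49020 := by
  have hg := fun l ↦ gather_bounds l t
  have hl := fun l ↦ lane_bounds l t
  rw [abs_le]
  cases w with
  | addr l | datum l => specialize hl l; simp only [pos]; split_ifs <;> omega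
  | incr l | key l | query l | exec l => simp only [pos]; omega
  | result l => specialize hg l; simp only [pos]; omega
  | joined => specialize hg 6; simp only [pos]; omega
  | home => simp only [pos]; split_ifs <;> omega
  | rawAddr | rawDatum | keepSig | plainAddr | starSig => simp [pos]

theorem abs_pos_succ_sub_le (w : Wire) (t : ℕ) : |w.pos (t + 1) - w.pos t| ≤ 7 := by
  have hl := fun l ↦ lane_step l t
  have hl₀ : ∀ l, t ≤ 2 → lane l t = 0 ∧ lane l (t + 1) = 0 := fun l ht ↦ by
    rw [lane_of_le (by omega), lane_of_le (by omega)]; omega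
  simp only [abs_le] at hl ⊢
  cases w with
  | addr l | datum l =>
    specialize hl l; specialize hl₀ l
    simp only [pos]; split_ifs <;> omega
  | incr l | key l | query l | exec l => simp only [pos]; omega
  | result l | joined => exact abs_le.1 (gather_step _ t)
  | home => simp only [pos]; split_ifs <;> omega
  | rawAddr | rawDatum | keepSig | plainAddr | starSig => simp [pos]

end Wire

/-! ### The program of a cell -/

/-- A place in a macro-cell together with an age. -/
abbrev Slot := ZMod 7000 × ZMod 49023

/-- The slot of the cell `d` places to the right, one step later. -/
def Slot.next (p : Slot) (d : ℤ) : Slot := (p.1 + (d : ZMod 7000), p.2 + 1)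

/-- What a cell may carry besides its own slot: the slot of a simulated cell, the messages of the
signals `query` and `exec`, and the two tokens by which the presence of a simulated cell is
verified. -/
inductive Datum
  | plain (p : Slot)
  | query (l : Fin 7) (p : Slot)
  | exec (l : Fin 7) (p : Slot)
  | keep
  | star

/-- The operations which may be applied to a datum while it moves. -/
inductive Op
  | id
  | plain
  | keep
  | star
  | advance (l : Fin 7)
  | query (l : Fin 7)

/-- Application of an operation; the result `none` means that nothing is moved. -/
def Op.apply : Op → Datum → Option Datum
  | .id, m => some m
  | .plain, .plain p => some (.plain p)
  | .keep, .plain _ => some .keep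
  | .star, _ => some .star
  | .advance l, .plain p => some (.plain (p.next (disp l)))
  | .query l, .plain p => some (.query l p)
  | _, _ => none

/-- The instruction of the program to move, at age `t`, the datum at place `o` by `d` cells while
applying an operation. Apart from the moves along a signal, these are the instructions at the times
at which signals are born. -/
inductive Move (t : ℕ) : ℤ → ℤ → Op → Prop
  | along (w : Wire) : w.Alive t → w.Alive (t + 1) →
      Move t (w.pos t) (w.pos (t + 1) - w.pos t) .id
  | keep : t = 0 → Move t 0 0 .keep
  | plain : t = 0 → Move t 0 1 .plain
  | star : t = 0 → Move t 7 1 .star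
  | advance (l : Fin 7) : t = 7009 → Move t (7 + l) (-7) (.advance l)
  | key : t = 7015 → Move t 0 0 .id
  | key' : t = 7015 → Move t 1 (-1) .id
  | home : t = 7022 → Move t 0 (-7) .id
  | query (l : Fin 7) : t = 7022 → Move t l 0 (.query l)

/-- The instruction of the program to combine, at age `t`, the data at the places `o - 7` and
`o`. -/
inductive Gate (t : ℕ) : ℤ → Prop
  | datum : t = 1 → Gate t 7
  | addr : t = 1 → Gate t 8
  | exec (l : Fin 7) : t = 7023 → Gate t (7 + l)
  | result (l : Fin 7) : t = 7024 → Gate t (14 + l)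
  | joined : t = 7027 → Gate t 20

/-- The program moves the datum `m` of a cell with slot `p` by `d` cells and turns it into `v`. -/
def Moves (p : Slot) (d : ℤ) (m v : Datum) : Prop :=
  ∃ (o : ℤ) (u : Op), (o : ZMod 7000) = p.1 ∧ Move p.2.val o d u ∧ u.apply m = some v

/-- The slot `p` holds the left operand of a gate. -/
def IsLeft (p : Slot) : Prop := ∃ o : ℤ, Gate p.2.val o ∧ ((o - 7 : ℤ) : ZMod 7000) = p.1

/-- The slot `p` holds the right operand of a gate. -/
def IsRight (p : Slot) : Prop := ∃ o : ℤ, Gate p.2.val o ∧ (o : ZMod 7000) = p.1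

open Classical in
/-- The contribution which a cell with slot `p` and datum `m` sends along lane `l`. -/
noncomputable def send (l : Fin 7) (p : Slot) (m : Datum) : Option Datum :=
  if l.val < 5 then if h : ∃ v, Moves p (disp l) m v then some h.choose else none
  else if l.val = 5 then if IsLeft p then some m else none
  else if IsRight p then some m else none

open Classical in
/-- The function computed by the gates. The last case makes a macro-cell apply the program, gates
included, to the cell it simulates. -/
noncomputable def combine : Datum → Datum → Option Datum
  | .keep, m => some m
  | .plain p, .star => some (.plain p)
  | .query l p', .plain p => if p.next (disp l) = p' then some (.exec l p) else none
  | .exec l p, m => send l p m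
  | _, _ => none

/-- If `S` describes the data of a row whose cells have places equal to their positions modulo
`7000` and age `t`, then the program sends the datum `v` to the cell `c`. -/
inductive Push (t : ℕ) (S : ℤ → Datum → Prop) (c : ℤ) (v : Datum) : Prop
  | move (o d : ℤ) (u : Op) (q : ℤ) (m : Datum) : Move t o d u → c = 7000 * q + o + d →
      S (7000 * q + o) m → u.apply m = some v → Push t S c v
  | gate (o q : ℤ) (m₁ m₂ : Datum) : Gate t o → c = 7000 * q + o → S (c - 7) m₁ → S c m₂ →
      combine m₁ m₂ = some v → Push t S c v

theorem Push.mono {t : ℕ} {S S' : ℤ → Datum → Prop} (hS : ∀ c v, S c v → S' c v) {c : ℤ}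
    {v : Datum} : Push t S c v → Push t S' c v
  | .move o d u q m h hc hm hv => .move o d u q m h hc (hS _ _ hm) hv
  | .gate o q m₁ m₂ h hc h₁ h₂ hv => .gate o q m₁ m₂ h hc (hS _ _ h₁) (hS _ _ h₂) hv

theorem Push.congr {t : ℕ} {S S' : ℤ → Datum → Prop} (hS : ∀ c v, S c v ↔ S' c v) {c : ℤ}
    {v : Datum} : Push t S c v ↔ Push t S' c v :=
  ⟨.mono fun c v ↦ (hS c v).1, .mono fun c v ↦ (hS c v).2⟩

theorem intCast_eq_intCast_iff_exists {a b : ℤ} :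
    (a : ZMod 7000) = b ↔ ∃ q, b = 7000 * q + a := by
  rw [ZMod.intCast_eq_intCast_iff_dvd_sub]
  exact exists_congr fun q ↦ by push_cast; omega

theorem Move.exists_lane {t : ℕ} {o d : ℤ} {u : Op} (h : Move t o d u) :
    ∃ l : Fin 7, l.val < 5 ∧ disp l = d := by
  suffices hd : d ∈ ({0, 1, -1, 7, -7} : Set ℤ) by
    obtain rfl | rfl | rfl | rfl | rfl := hd
    exacts [⟨0, by decide⟩, ⟨1, by decide⟩, ⟨2, by decide⟩, ⟨3, by decide⟩, ⟨4, by decide⟩]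
  simp only [Set.mem_insert_iff, Set.mem_singleton_iff]
  cases h with
  | along w hw hw₁ =>
    obtain ⟨hb, hd⟩ := hw
    have hd₁ := hw₁.2
    cases w <;> simp only [Wire.birth, Wire.death, Wire.pos, lane, flight] at hb hd hd₁ ⊢
    case addr l | datum l => have := disp_bounds l; split_ifs <;> omega
    case result l => simp only [gather, zigzag]; split_ifs at hd hd₁ ⊢ <;> omega
    case joined => simp only [gather, zigzag]; split_ifs <;> omega
    case home => split_ifs <;> omega
    all_goals omega
  | _ => omega

theorem Move.op_unique {t : ℕ} {o o' d d' : ℤ} {u u' : Op} (h : Move t o d u)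
    (h' : Move t o' d' u') (ho : (o : ZMod 7000) = o') (hd : d = d') : u = u' := by
  obtain ⟨q, hq⟩ := intCast_eq_intCast_iff_exists.1 ho
  wlog hu : u ≠ .id generalizing o o' d d' u u' q
  · by_cases hu' : u' = .id
    · rw [not_not.1 hu, hu']
    · exact (this h' h ho.symm hd.symm (-q) (by omega) hu').symm
  cases h <;> cases h'
  case keep.along _ w hw hw₁ | plain.along _ w hw hw₁ | star.along _ w hw hw₁ |
      advance.along _ w hw hw₁ | query.along _ w hw hw₁ =>
    obtain ⟨hb, -⟩ := hw
    have hd' := hw₁.2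
    cases w with
    | addr l | datum l =>
      have (ht : 7009 ≤ t) := lane_of_ge (l := l) ht
      have (ht : 7009 ≤ t) := lane_of_ge (l := l) (t := t + 1) (by omega)
      simp only [Wire.birth, Wire.death, Wire.pos] at hb hd' hq hd
      split_ifs at hq hd <;> omega
    | result l =>
      simp only [Wire.birth] at hb; omega
    | _ => simp only [Wire.birth, Wire.death, Wire.pos] at hb hd' hq hd; omega
  all_goals first | contradiction | rfl | (congr 1; omega)

theorem Moves.unique {p : Slot} {d : ℤ} {m v v' : Datum} (h : Moves p d m v)
    (h' : Moves p d m v') : v = v' := by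
  obtain ⟨o, u, ho, hu, hv⟩ := h
  obtain ⟨o', u', ho', hu', hv'⟩ := h'
  rw [hu.op_unique hu' (ho.trans ho'.symm) rfl, hv'] at hv
  exact (Option.some.inj hv).symm

theorem send_eq_some_of_lt {l : Fin 7} (hl : l.val < 5) {p : Slot} {m v : Datum} :
    send l p m = some v ↔ Moves p (disp l) m v := by
  rw [send, if_pos hl]
  split_ifs with h
  · rw [Option.some_inj]
    exact ⟨fun hv ↦ hv ▸ h.choose_spec, h.choose_spec.unique⟩
  · exact ⟨fun hv ↦ (nomatch hv), fun hv ↦ (h ⟨v, hv⟩).elim⟩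

theorem send_left_eq_some {p : Slot} {m v : Datum} :
    send 5 p m = some v ↔ IsLeft p ∧ m = v := by
  simp [send]

theorem send_right_eq_some {p : Slot} {m v : Datum} :
    send 6 p m = some v ↔ IsRight p ∧ m = v := by
  simp [send]

/-! ### The computation of a macro-cell -/

/-- The contents of the signals `rawAddr`, `rawDatum` and `key` in each macro-cell; the contents of
the other signals are determined by them. -/
structure Env where
  rawAddr : ℤ → Datum → Prop
  rawDatum : ℤ → Datum → Prop
  key : ℤ → Datum → Prop

namespace Env

variable (E : Env)

/-- The macro-cell `J` simulates a cell with the slot in `v`. -/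
def addr (J : ℤ) (v : Datum) : Prop :=
  ∃ p m, v = .plain p ∧ E.rawAddr J (.plain p) ∧ E.rawDatum J m

/-- The macro-cell `J` simulates a cell with the datum `v`. -/
def datum (J : ℤ) (v : Datum) : Prop := ∃ p, E.rawAddr J (.plain p) ∧ E.rawDatum J v

/-- Lane `l` announces the slot in `v` for the successor of the cell simulated by `J`. -/
def incr (l : Fin 7) (J : ℤ) (v : Datum) : Prop :=
  ∃ p, E.addr (J - disp l) (.plain p) ∧ v = .plain (p.next (disp l))

/-- The outcome `v` of the program for lane `l` at macro-cell `J`. -/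
def result (l : Fin 7) (J : ℤ) (v : Datum) : Prop :=
  ∃ p m, E.key J (.plain (p.next (disp l))) ∧ E.addr (J - disp l) (.plain p) ∧
    E.datum (J - disp l) m ∧ send l p m = some v

/-- The outcome `v` of a simulated gate at macro-cell `J`. -/
def joined (J : ℤ) (v : Datum) : Prop :=
  ∃ v₁ v₂, E.result 5 J v₁ ∧ E.result 6 J v₂ ∧ combine v₁ v₂ = some v

/-- The possible contents of the signals of macro-cell `J`. -/
def content : Wire → ℤ → Datum → Prop
  | .rawAddr => E.rawAddr
  | .rawDatum => E.rawDatum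
  | .keepSig => fun J v ↦ v = .keep ∧ ∃ p, E.rawAddr J (.plain p)
  | .plainAddr => fun J v ↦ ∃ p, v = .plain p ∧ E.rawAddr J v
  | .starSig => fun J v ↦ v = .star ∧ ∃ m, E.rawDatum J m
  | .addr _ => E.addr
  | .datum _ => E.datum
  | .incr l => E.incr l
  | .key _ => E.key
  | .home => E.key
  | .query l => fun J v ↦ ∃ p, E.key J (.plain p) ∧ v = .query l p
  | .exec l => fun J v ↦
      ∃ p, E.key J (.plain (p.next (disp l))) ∧ E.addr (J - disp l) (.plain p) ∧ v = .exec l p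
  | .result l => E.result l
  | .joined => E.joined

/-- The row of data which, at age `t`, the signals of all macro-cells form together. -/
def State (t : ℕ) (c : ℤ) (v : Datum) : Prop :=
  ∃ J w, Wire.Alive w t ∧ c = 7000 * J + w.pos t ∧ E.content w J v

theorem collision {t : ℕ} {w w' : Wire} {J K : ℤ} (hw : w.Alive t) (hw' : w'.Alive t)
    (h : 7000 * J + w.pos t = 7000 * K + w'.pos t) :
    J = K ∧ (E.content w = E.content w' ∨ (t ∈ Set.Icc 7010 7015 ∨ 7028 ≤ t) ∧
      w.death = w'.death ∧ w.pos (t + 1) = w'.pos (t + 1)) := by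
  obtain rfl | hne := eq_or_ne w w'
  · exact ⟨by linarith, .inl rfl⟩
  obtain ⟨hb, hd⟩ := hw
  obtain ⟨hb', hd'⟩ := hw'
  have hl (l : Fin 7) (ht : 7009 ≤ t) := lane_of_ge (l := l) ht
  have hg (l : Fin 7) := gather_bounds l t
  have hg' (l : Fin 7) (ht : t < 7035) := gather_le (l := l) ht
  cases w <;> cases w' <;> simp only [Wire.birth, Wire.death, Wire.pos] at hb hd hb' hd' h ⊢
  case addr.addr l l' | datum.datum l l' =>
    have := (lane_separation l l' t (K - J)).1
    refine ⟨?_, .inl rfl⟩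
    split_ifs at h <;> omega
  case addr.datum l l' =>
    have := (lane_separation l l' t (K - J)).2
    split_ifs at h <;> omega
  case datum.addr l l' =>
    have := (lane_separation l' l t (J - K)).2
    split_ifs at h <;> omega
  case addr.incr l _ | addr.key l _ | addr.query l _ | addr.home l | datum.incr l _ |
      datum.key l _ | datum.query l _ | datum.exec l _ | datum.home l =>
    specialize hl l; split_ifs at h <;> omega
  case incr.addr l | key.addr l | query.addr l | home.addr l | incr.datum l | key.datum l |
      query.datum l | exec.datum l | home.datum l =>
    specialize hl l; split_ifs at h <;> omega
  case incr.incr =>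
    exact ⟨by omega, .inr ⟨.inl ⟨hb, hd⟩, trivial, by omega⟩⟩
  case key.key => exact ⟨by omega, .inl rfl⟩
  case query.query l l' | exec.exec l l' =>
    exact absurd (congrArg _ (Fin.ext (by omega))) hne
  case home.result l | result.home l => specialize hg l; specialize hg' l; split_ifs at h <;> omega
  case home.joined | joined.home => specialize hg 6; specialize hg' 6; split_ifs at h <;> omega
  case result.result l l' =>
    have hne' : l ≠ l' := fun hll ↦ hne (congrArg _ hll)
    obtain ⟨hJ, ht, hp⟩ := gather_merge hne' hb (by split_ifs at hd hd' <;> omega) h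
    exact ⟨hJ, .inr ⟨.inr ht, by split_ifs at hd hd' ⊢ <;> omega, hp⟩⟩
  case result.joined l =>
    obtain ⟨hJ, ht, hp⟩ := gather_merge (by split_ifs at hd <;> omega) hb
      (by split_ifs at hd <;> omega) h
    exact ⟨hJ, .inr ⟨.inr ht, by split_ifs at hd ⊢ <;> omega, hp⟩⟩
  case joined.result l =>
    obtain ⟨hJ, ht, hp⟩ := gather_merge (by split_ifs at hd' <;> omega) hb'
      (by split_ifs at hd' <;> omega) h
    exact ⟨hJ, .inr ⟨.inr ht, by split_ifs at hd' ⊢ <;> omega, hp⟩⟩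
  all_goals first | contradiction | omega

variable {E}

theorem State.along {t : ℕ} {J : ℤ} {v : Datum} {w : Wire} (h : E.State t (7000 * J + w.pos t) v)
    (hw : w.Alive t) (hw₁ : w.Alive (t + 1)) : E.State (t + 1) (7000 * J + w.pos (t + 1)) v := by
  obtain ⟨K, w', hw', hc, hv⟩ := h
  obtain ⟨rfl, he | ⟨-, hd, hp⟩⟩ := E.collision hw hw' hc
  · exact ⟨J, w, hw₁, rfl, he ▸ hv⟩
  · exact ⟨J, w', ⟨hw'.1.trans t.le_succ, hd ▸ hw₁.2⟩, by rw [hp], hv⟩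

theorem state_iff {t : ℕ} {c J : ℤ} {v : Datum} {w : Wire} (hw : w.Alive t)
    (ht : t < 7010 ∨ 7016 ≤ t ∧ t < 7028) (hc : c = 7000 * J + w.pos t) :
    E.State t c v ↔ E.content w J v := by
  refine ⟨fun ⟨K, w', hw', hc', hv⟩ ↦ ?_, fun hv ↦ ⟨J, w, hw, hc, hv⟩⟩
  obtain ⟨rfl, he | ⟨ht', -⟩⟩ := E.collision hw hw' (hc ▸ hc')
  · rwa [he]
  · simp only [Set.mem_Icc] at ht'; omega

section Operands

variable {t : ℕ} {J : ℤ} {l : Fin 7} {v : Datum}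

theorem state_rawAddr : E.State 0 (7000 * J) v ↔ E.rawAddr J v :=
  state_iff (w := .rawAddr) ⟨le_rfl, le_rfl⟩ (by norm_num) (by simp [Wire.pos])

theorem state_rawDatum (ht : t ≤ 1) : E.State t (7000 * J + 7) v ↔ E.rawDatum J v :=
  state_iff (w := .rawDatum) ⟨t.zero_le, ht⟩ (by omega) rfl

theorem state_keepSig : E.State 1 (7000 * J) v ↔ v = .keep ∧ ∃ p, E.rawAddr J (.plain p) :=
  state_iff (w := .keepSig) ⟨le_rfl, le_rfl⟩ (by norm_num) (by simp [Wire.pos])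

theorem state_plainAddr : E.State 1 (7000 * J + 1) v ↔ ∃ p, v = .plain p ∧ E.rawAddr J v :=
  state_iff (w := .plainAddr) ⟨le_rfl, le_rfl⟩ (by norm_num) rfl

theorem state_starSig : E.State 1 (7000 * J + 8) v ↔ v = .star ∧ ∃ m, E.rawDatum J m :=
  state_iff (w := .starSig) ⟨le_rfl, le_rfl⟩ (by norm_num) rfl

theorem state_addr (ht : 7009 ≤ t ∧ t ≤ 7023 ∧ ¬ (7010 ≤ t ∧ t ≤ 7015)) :
    E.State t (7000 * J + (7 + l)) v ↔ E.addr (J - disp l) v :=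
  state_iff (w := .addr l) (by simp only [Wire.Alive, Wire.birth, Wire.death]; omega) (by omega)
    (by simp only [Wire.pos, lane_of_ge ht.1]; rw [if_neg (by omega)]; ring)

theorem state_key (ht : t = 7022) : E.State t (7000 * J + l) v ↔ E.key J v :=
  state_iff (w := .key l) (by simp only [Wire.Alive, Wire.birth, Wire.death]; omega) (by omega)
    (by simp only [Wire.pos]; omega)

theorem state_query (ht : t = 7023) :
    E.State t (7000 * J + l) v ↔ ∃ p, E.key J (.plain p) ∧ v = .query l p :=
  state_iff (w := .query l) (by simp only [Wire.Alive, Wire.birth, Wire.death]; omega)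
    (by omega) rfl

theorem state_exec (ht : t = 7024) : E.State t (7000 * J + (7 + l)) v ↔
    ∃ p, E.key J (.plain (p.next (disp l))) ∧ E.addr (J - disp l) (.plain p) ∧ v = .exec l p :=
  state_iff (w := .exec l) (by simp only [Wire.Alive, Wire.birth, Wire.death]; omega)
    (by omega) rfl

theorem state_datum (ht : t = 7024) :
    E.State t (7000 * J + (14 + l)) v ↔ E.datum (J - disp l) v :=
  state_iff (w := .datum l) (by simp only [Wire.Alive, Wire.birth, Wire.death]; omega) (by omega)
    (by simp only [Wire.pos]; rw [if_neg (by omega), lane_of_ge (by omega)]; ring)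

theorem state_left (ht : t = 7027) : E.State t (7000 * J + 13) v ↔ E.result 5 J v :=
  state_iff (w := .result 5) (by subst ht; exact ⟨by decide, le_rfl⟩) (by omega)
    (by simp only [Wire.pos, gather]; split_ifs <;> omega)

theorem state_right (ht : t = 7027) : E.State t (7000 * J + 20) v ↔ E.result 6 J v :=
  state_iff (w := .result 6) (by subst ht; exact ⟨by decide, le_rfl⟩) (by omega)
    (by simp only [Wire.pos, gather]; split_ifs <;> omega)

theorem State.incr (ht : t = 7015) {c : ℤ} (h : E.State t c v)
    (hc : c = 7000 * J + (Wire.incr l).pos t) : ∃ l, E.incr l J v := by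
  obtain ⟨K, w, hw, hc', hv⟩ := h
  have ha : Wire.Alive (.incr l) t := by simp only [Wire.Alive, Wire.birth, Wire.death]; omega
  obtain ⟨rfl, he | ⟨-, hd, -⟩⟩ := E.collision ha hw (hc ▸ hc')
  · exact ⟨l, by rwa [← he] at hv⟩
  · cases w <;> simp only [Wire.death] at hd
    case incr l' => exact ⟨l', hv⟩
    case result => split_ifs at hd <;> omega
    all_goals omega

theorem state_incr (ht : t = 7015) : E.State t (7000 * J) v ∨ E.State t (7000 * J + 1) v ↔
    ∃ l, E.incr l J v := by
  constructor
  · rintro (h | h)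
    · exact h.incr (l := 0) ht (by simp only [Wire.pos]; omega)
    · exact h.incr (l := 6) ht (by simp only [Wire.pos]; omega)
  · rintro ⟨l, hv⟩
    have ha : Wire.Alive (.incr l) t := by simp only [Wire.Alive, Wire.birth, Wire.death]; omega
    rcases lt_or_ge l.val 6 with hl | hl
    · exact .inl ⟨J, .incr l, ha, by simp only [Wire.pos]; omega, hv⟩
    · exact .inr ⟨J, .incr l, ha, by simp only [Wire.pos]; omega, hv⟩

end Operands

theorem State.move {t : ℕ} {o d q : ℤ} {u : Op} {m v : Datum} (hK : t = 7015 → ∀ J v,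
    (E.key J v ↔ ∃ l, E.incr l J v)) (h : Move t o d u) (hm : E.State t (7000 * q + o) m)
    (hv : u.apply m = some v) : E.State (t + 1) (7000 * q + o + d) v := by
  cases h with
  | along w hw hw₁ =>
    cases hv
    simpa [add_assoc] using hm.along hw hw₁
  | keep ht =>
    subst ht
    rw [add_zero, state_rawAddr] at hm
    cases m <;> cases hv
    exact ⟨q, .keepSig, ⟨le_rfl, le_rfl⟩, by simp [Wire.pos], rfl, _, hm⟩
  | plain ht =>
    subst ht
    rw [add_zero, state_rawAddr] at hm
    cases m <;> cases hv
    exact ⟨q, .plainAddr, ⟨le_rfl, le_rfl⟩, by simp [Wire.pos], _, rfl, hm⟩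
  | star ht =>
    subst ht
    obtain rfl : v = .star := by cases m <;> exact (Option.some.inj hv).symm
    exact ⟨q, .starSig, ⟨le_rfl, le_rfl⟩, by simp only [Wire.pos]; ring, rfl, m,
      (state_rawDatum zero_le_one).1 hm⟩
  | advance l ht =>
    rw [state_addr (by omega)] at hm
    cases m <;> cases hv
    exact ⟨q, .incr l, by simp only [Wire.Alive, Wire.birth, Wire.death]; omega,
      by simp only [Wire.pos]; omega, _, hm, rfl⟩
  | key ht | key' ht =>
    cases hv
    exact ⟨q, .key 0, by simp only [Wire.Alive, Wire.birth, Wire.death]; omega,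
      by simp only [Wire.pos]; omega, (hK ht q _).2 ((state_incr ht).1 (by simp_all))⟩
  | home ht =>
    cases hv
    exact ⟨q, .home, by simp only [Wire.Alive, Wire.birth, Wire.death]; omega,
      by simp only [Wire.pos]; rw [if_pos (by omega)]; ring, (state_key (l := 0) ht).1 hm⟩
  | query l ht =>
    rw [state_key ht] at hm
    cases m <;> cases hv
    exact ⟨q, .query l, by simp only [Wire.Alive, Wire.birth, Wire.death]; omega,
      by simp only [Wire.pos]; ring, _, hm, rfl⟩

theorem State.gate {t : ℕ} {o q : ℤ} {m₁ m₂ v : Datum} (h : Gate t o)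
    (h₁ : E.State t (7000 * q + (o - 7)) m₁) (h₂ : E.State t (7000 * q + o) m₂)
    (hv : combine m₁ m₂ = some v) : E.State (t + 1) (7000 * q + o) v := by
  cases h with
  | datum ht =>
    subst ht
    obtain ⟨rfl, p, hp⟩ := state_keepSig.1 (by simpa using h₁)
    obtain rfl : m₂ = v := by simpa [combine] using hv
    exact ⟨q, .datum 0, ⟨le_rfl, by simp [Wire.death]⟩, by simp [Wire.pos], p, hp,
      (state_rawDatum le_rfl).1 h₂⟩
  | addr ht =>
    subst ht
    obtain ⟨p, rfl, hp⟩ := state_plainAddr.1 (by simpa using h₁)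
    obtain ⟨rfl, m, hm⟩ := state_starSig.1 h₂
    obtain rfl : .plain p = v := by simpa [combine] using hv
    exact ⟨q, .addr 0, ⟨le_rfl, by simp [Wire.death]⟩, by simp [Wire.pos], p, m, rfl, hp,
      by simpa using hm⟩
  | exec l ht =>
    obtain ⟨p', hp', rfl⟩ := (state_query (l := l) ht).1 (by simpa using h₁)
    obtain h₂ := (state_addr (by omega)).1 h₂
    obtain ⟨p, m, rfl, -⟩ := id h₂
    simp only [combine, Option.ite_none_right_eq_some, Option.some.injEq] at hv
    obtain ⟨rfl, rfl⟩ := hv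
    exact ⟨q, .exec l, by simp only [Wire.Alive, Wire.birth, Wire.death]; omega, rfl, p, hp', h₂,
      rfl⟩
  | result l ht =>
    obtain ⟨p, hk, hp, rfl⟩ := (state_exec (l := l) ht).1 (by convert h₁ using 2; ring)
    exact ⟨q, .result l, by
        simp only [Wire.Alive, Wire.birth, Wire.death]; split_ifs <;> omega,
      by simp only [Wire.pos, gather]; split_ifs <;> omega, p, m₂, hk, hp,
      (state_datum ht).1 h₂, hv⟩
  | joined ht =>
    exact ⟨q, .joined, by simp only [Wire.Alive, Wire.birth, Wire.death]; omega,
      by simp only [Wire.pos, gather]; split_ifs <;> omega, m₁, m₂,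
      (state_left ht).1 h₁, (state_right ht).1 h₂, hv⟩

theorem push_keepSig {J : ℤ} {v : Datum} (h : E.content .keepSig J v) :
    Push 0 (E.State 0) (7000 * J) v := by
  obtain ⟨rfl, p, hp⟩ := h
  exact .move 0 0 .keep J (.plain p) (.keep rfl) (by ring) (by simpa [state_rawAddr] using hp) rfl

theorem push_plainAddr {J : ℤ} {v : Datum} (h : E.content .plainAddr J v) :
    Push 0 (E.State 0) (7000 * J + 1) v := by
  obtain ⟨p, rfl, hp⟩ := h
  exact .move 0 1 .plain J (.plain p) (.plain rfl) (by ring) (by simpa [state_rawAddr] using hp) rfl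

theorem push_starSig {J : ℤ} {v : Datum} (h : E.content .starSig J v) :
    Push 0 (E.State 0) (7000 * J + 8) v := by
  obtain ⟨rfl, m, hm⟩ := h
  exact .move 7 1 .star J m (.star rfl) (by ring) ((state_rawDatum zero_le_one).2 hm) rfl

theorem push_addr {J : ℤ} {v : Datum} (h : E.addr J v) :
    Push 1 (E.State 1) (7000 * J + 8) v := by
  obtain ⟨p, m, rfl, hp, hm⟩ := h
  exact .gate 8 J (.plain p) .star (.addr rfl) rfl
    (by rw [add_sub_assoc]; exact state_plainAddr.2 ⟨p, rfl, hp⟩)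
    (state_starSig.2 ⟨rfl, m, hm⟩) rfl

theorem push_datum {J : ℤ} {v : Datum} (h : E.datum J v) :
    Push 1 (E.State 1) (7000 * J + 7) v := by
  obtain ⟨p, hp, hv⟩ := h
  exact .gate 7 J .keep v (.datum rfl) rfl
    (by rw [add_sub_cancel_right]; exact state_keepSig.2 ⟨rfl, p, hp⟩)
    ((state_rawDatum le_rfl).2 hv) rfl

section Late

variable {t : ℕ} {J : ℤ} {l : Fin 7} {v : Datum}

theorem push_incr (ht : t = 7009) (h : E.incr l J v) :
    Push t (E.State t) (7000 * J + (Wire.incr l).pos (t + 1)) v := by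
  obtain ⟨p, hp, rfl⟩ := h
  exact .move (7 + l) (-7) (.advance l) J (.plain p) (.advance l ht)
    (by simp only [Wire.pos]; omega) (by rwa [state_addr (by omega)]) rfl

theorem push_key (ht : t = 7015) (h : ∃ l, E.incr l J v) :
    Push t (E.State t) (7000 * J + (Wire.key l).pos (t + 1)) v := by
  have hpos : (Wire.key l).pos (t + 1) = 0 := by simp only [Wire.pos]; omega
  rw [hpos]
  rcases (state_incr ht).2 h with h | h
  · exact .move 0 0 .id J v (.key ht) (by ring) (by simpa using h) rfl
  · exact .move 1 (-1) .id J v (.key' ht) (by ring) h rfl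

theorem push_home (ht : t = 7022) (h : E.key J v) :
    Push t (E.State t) (7000 * J + Wire.home.pos (t + 1)) v :=
  .move 0 (-7) .id J v (.home ht) (by simp only [Wire.pos]; rw [if_pos (by omega)]; ring)
    ((state_key (l := 0) ht).2 h) rfl

theorem push_query (ht : t = 7022) (h : E.content (.query l) J v) :
    Push t (E.State t) (7000 * J + l) v := by
  obtain ⟨p, hp, rfl⟩ := h
  exact .move l 0 (.query l) J (.plain p) (.query l ht) (by ring) ((state_key ht).2 hp) rfl

theorem push_exec (ht : t = 7023) (h : E.content (.exec l) J v) :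
    Push t (E.State t) (7000 * J + (7 + l)) v := by
  obtain ⟨p, hp, hp', rfl⟩ := h
  refine .gate (7 + l) J (.query l (p.next (disp l))) (.plain p) (.exec l ht) rfl ?_
    ((state_addr (by omega)).2 hp') (if_pos rfl)
  rw [show 7000 * J + (7 + (l : ℤ)) - 7 = 7000 * J + l by ring]
  exact (state_query ht).2 ⟨_, hp, rfl⟩

theorem push_result (ht : t = 7024) (h : E.result l J v) :
    Push t (E.State t) (7000 * J + (Wire.result l).pos (t + 1)) v := by
  obtain ⟨p, m, hp, hp', hm, hv⟩ := h
  have hpos : (Wire.result l).pos (t + 1) = 14 + l := by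
    simp only [Wire.pos, gather]; split_ifs <;> omega
  rw [hpos]
  refine .gate (14 + l) J (.exec l p) m (.result l ht) rfl ?_ ((state_datum ht).2 hm) hv
  rw [show 7000 * J + (14 + (l : ℤ)) - 7 = 7000 * J + (7 + l) by ring]
  exact (state_exec ht).2 ⟨p, hp, hp', rfl⟩

theorem push_joined (ht : t = 7027) (h : E.joined J v) :
    Push t (E.State t) (7000 * J + Wire.joined.pos (t + 1)) v := by
  obtain ⟨v₁, v₂, h₁, h₂, hv⟩ := h
  have hpos : Wire.joined.pos (t + 1) = 20 := by
    simp only [Wire.pos, gather]; split_ifs <;> omega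
  rw [hpos]
  refine .gate 20 J v₁ v₂ (.joined ht) rfl ?_ ((state_right ht).2 h₂) hv
  rw [add_sub_assoc]
  exact (state_left ht).2 h₁

end Late

theorem push_of_birth {t : ℕ} {J : ℤ} {v : Datum} {w : Wire} (hw : w.birth = t + 1)
    (hK : t = 7015 → (E.key J v ↔ ∃ l, E.incr l J v)) (hv : E.content w J v) :
    Push t (E.State t) (7000 * J + w.pos (t + 1)) v := by
  cases w <;> simp only [Wire.birth] at hw
  case rawAddr | rawDatum => omega
  case keepSig => obtain rfl : t = 0 := by omega
                  simpa [Wire.pos] using push_keepSig hv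
  case plainAddr => obtain rfl : t = 0 := by omega
                    exact push_plainAddr hv
  case starSig => obtain rfl : t = 0 := by omega
                  exact push_starSig hv
  case addr => obtain rfl : t = 1 := by omega
               exact push_addr hv
  case datum => obtain rfl : t = 1 := by omega
                exact push_datum hv
  case incr => exact push_incr (by omega) hv
  case key => exact push_key (by omega) ((hK (by omega)).1 hv)
  case home => exact push_home (by omega) hv
  case query => exact push_query (by omega) hv
  case exec => exact push_exec (by omega) hv
  case result => exact push_result (by omega) hv
  case joined => exact push_joined (by omega) hv

/-- The hypothesis says that the signals `incr` merge into `key`. -/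
theorem push_state_iff {t : ℕ} (hK : t = 7015 → ∀ J v, (E.key J v ↔ ∃ l, E.incr l J v)) {c : ℤ}
    {v : Datum} : Push t (E.State t) c v ↔ E.State (t + 1) c v := by
  constructor
  · rintro (⟨o, d, u, q, m, h, rfl, hm, hv⟩ | ⟨o, q, m₁, m₂, h, rfl, h₁, h₂, hv⟩)
    · exact .move hK h hm hv
    · exact .gate h (by rwa [← add_sub_assoc]) h₂ hv
  · rintro ⟨J, w, hw, rfl, hv⟩
    obtain ht | ht := hw.1.lt_or_eq
    · have hw' : w.Alive t := ⟨Nat.lt_succ_iff.1 ht, t.le_succ.trans hw.2⟩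
      exact .move _ _ .id J v (.along w hw' hw) (by ring) ⟨J, w, hw', rfl, hv⟩ rfl
    · exact push_of_birth ht (fun h ↦ hK h J v) hv

end Env

/-! ### Configurations and the rule -/

/-- A cell is blank or carries its slot and a datum. -/
abbrev Cell := Option (Slot × Datum)

/-- Configurations of the automaton. -/
abbrev Conf := ℤ → Cell

/-- The cell on lane `l` towards `c` sends the datum `v`, and announces the slot `p` for `c`. -/
def Sent (x : Conf) (l : Fin 7) (c : ℤ) (p : Slot) (v : Datum) : Prop :=
  ∃ p' m, x (c - disp l) = some (p', m) ∧ p'.next (disp l) = p ∧ send l p' m = some v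

/-- The contents which the neighbours of `c` propose for `c`, by a move along one of the lanes
`0`–`4` or by a gate with operands on the lanes `5` and `6`. -/
def Pushed (x : Conf) (c : ℤ) (s : Slot × Datum) : Prop :=
  (∃ l : Fin 7, l.val < 5 ∧ Sent x l c s.1 s.2) ∨
    ∃ v₁ v₂, Sent x 5 c s.1 v₁ ∧ Sent x 6 c s.1 v₂ ∧ combine v₁ v₂ = some s.2

open Classical in
/-- The rule of the automaton: a cell takes a content when this is the only one proposed for it. -/
noncomputable def step (x : Conf) : Conf := fun c ↦
  if h : ∃! s, Pushed x c s then some h.choose else none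

theorem step_eq_some_iff {x : Conf} {c : ℤ} {s : Slot × Datum} :
    step x c = some s ↔ Pushed x c s ∧ ∀ s', Pushed x c s' → s' = s := by
  unfold step
  split_ifs with h
  · rw [Option.some_inj]
    exact ⟨fun hs ↦ hs ▸ h.choose_spec, fun hs ↦ hs.2 _ h.choose_spec.1⟩
  · exact ⟨fun hs ↦ (nomatch hs), fun hs ↦ (h ⟨s, hs⟩).elim⟩

/-- `x'` is a weak successor of `x` if each of its cells is blank or one of the contents proposed
for it. Unlike `step`, this relation is inherited by simulated configurations. -/
def WeakSucc (x x' : Conf) : Prop := ∀ c s, x' c = some s → Pushed x c s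

theorem weakSucc_step (x : Conf) : WeakSucc x (step x) := fun _ _ h ↦ (step_eq_some_iff.1 h).1

/-- The slot of the cell `c` at time `t` when the slots agree with the coordinates. -/
def slot (c : ℤ) (t : ℕ) : Slot := (c, t)

theorem slot_next (c d : ℤ) (t : ℕ) : (slot (c - d) t).next d = slot c (t + 1) := by
  simp [Slot.next, slot]

theorem next_eq_slot_iff {p : Slot} {c d : ℤ} {t : ℕ} :
    p.next d = slot c (t + 1) ↔ p = slot (c - d) t := by
  simp [Slot.next, slot, Prod.ext_iff, eq_sub_iff_add_eq]

theorem slot_snd_val (c : ℤ) {t : ℕ} (ht : t < 49023) : (slot c t).2.val = t :=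
  ZMod.val_cast_of_lt ht

/-- The data of the cells of `x` whose slot agrees with the coordinates at time `t`. -/
def row (x : Conf) (t : ℕ) (c : ℤ) (v : Datum) : Prop := x c = some (slot c t, v)

theorem row.unique {x : Conf} {t : ℕ} {c : ℤ} {v v' : Datum} (h : row x t c v)
    (h' : row x t c v') : v = v' := by
  simpa using h.symm.trans h'

theorem sent_slot_iff {x : Conf} {l : Fin 7} {c : ℤ} {t : ℕ} {v : Datum} :
    Sent x l c (slot c (t + 1)) v ↔
      ∃ m, row x t (c - disp l) m ∧ send l (slot (c - disp l) t) m = some v := by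
  constructor
  · rintro ⟨p, m, hx, hp, hv⟩
    obtain rfl := next_eq_slot_iff.1 hp
    exact ⟨m, hx, hv⟩
  · rintro ⟨m, hx, hv⟩
    exact ⟨_, m, hx, slot_next _ _ _, hv⟩

theorem pushed_slot_iff {x : Conf} {t : ℕ} (ht : t < 49023) {c : ℤ} {v : Datum} :
    Pushed x c (slot c (t + 1), v) ↔ Push t (row x t) c v := by
  have hleft : disp 5 = 7 := rfl
  have hright : disp 6 = 0 := rfl
  have hval (c : ℤ) : (slot c t).2.val = t := slot_snd_val c ht
  simp only [Pushed, sent_slot_iff, send_left_eq_some, send_right_eq_some, hleft, hright, sub_zero]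
  constructor
  · rintro (⟨l, hl, m, hx, hv⟩ | ⟨_, _, ⟨m₁, h₁, -, rfl⟩, ⟨m₂, h₂, ⟨o, ho, hc⟩, rfl⟩, hv⟩)
    · obtain ⟨o, u, ho, hu, hv⟩ := (send_eq_some_of_lt hl).1 hv
      obtain ⟨q, hq⟩ := intCast_eq_intCast_iff_exists.1 ho
      rw [hval] at hu
      exact .move o _ u q m hu (by omega) (hq ▸ hx) hv
    · obtain ⟨q, hq⟩ := intCast_eq_intCast_iff_exists.1 hc
      rw [hval] at ho
      exact .gate o q m₁ m₂ ho hq h₁ h₂ hv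
  · rintro (⟨o, d, u, q, m, hu, rfl, hx, hv⟩ | ⟨o, q, m₁, m₂, ho, rfl, h₁, h₂, hv⟩)
    · obtain ⟨l, hl, rfl⟩ := hu.exists_lane
      refine .inl ⟨l, hl, m, by rwa [add_sub_cancel_right], (send_eq_some_of_lt hl).2 ⟨o, u, ?_⟩⟩
      rw [add_sub_cancel_right, hval]
      exact ⟨intCast_eq_intCast_iff_exists.2 ⟨q, rfl⟩, hu, hv⟩
    · refine .inr ⟨m₁, m₂, ⟨m₁, h₁, ⟨o, by rwa [hval], ?_⟩, rfl⟩,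
        ⟨m₂, h₂, ⟨o, by rwa [hval], ?_⟩, rfl⟩, hv⟩
      · exact intCast_eq_intCast_iff_exists.2 ⟨q, by ring⟩
      · exact intCast_eq_intCast_iff_exists.2 ⟨q, rfl⟩

/-! ### The simulated configuration -/

open Env

open Classical in
/-- The configuration simulated by `x`: the cell `J` is read off from the places `0` and `7` of the
macro-cell `J`, at times divisible by the period `49023`. -/
noncomputable def decode (x : Conf) : Conf := fun J ↦
  if h : ∃ s : Slot × Datum, row x 0 (7000 * J) (.plain s.1) ∧ row x 0 (7000 * J + 7) s.2
  then some h.choose else none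

theorem decode_eq_some_iff {x : Conf} {J : ℤ} {s : Slot × Datum} :
    decode x J = some s ↔ row x 0 (7000 * J) (.plain s.1) ∧ row x 0 (7000 * J + 7) s.2 := by
  unfold decode
  split_ifs with h
  · rw [Option.some_inj]
    refine ⟨fun hs ↦ hs ▸ h.choose_spec, fun hs ↦ Prod.ext ?_ ?_⟩
    · exact Datum.plain.inj (h.choose_spec.1.unique hs.1)
    · exact h.choose_spec.2.unique hs.2
  · exact ⟨fun hs ↦ (nomatch hs), fun hs ↦ (h ⟨s, hs⟩).elim⟩

theorem row_period {x : Conf} {c : ℤ} {v : Datum} : row x 49023 c v ↔ row x 0 c v := Iff.rfl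

/-- A sequence of configurations each of which is a weak successor of the preceding one. -/
def IsHistory (X : ℕ → Conf) : Prop := ∀ t, WeakSucc (X t) (X (t + 1))

/-- The signals by which the simulated configuration of `X 0` is processed. The contents of `key`
are read off from `X` when they have just been merged. -/
def envOf (X : ℕ → Conf) : Env where
  rawAddr J v := row (X 0) 0 (7000 * J) v
  rawDatum J v := row (X 0) 0 (7000 * J + 7) v
  key J v := row (X 7016) 7016 (7000 * J) v

/-- The same signals, with everything in `key` that the signals `incr` propose. -/
def Env.merge (E : Env) : Env := { E with key := fun J v ↦ ∃ l, E.incr l J v }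

theorem push_row_zero {X : ℕ → Conf} {c : ℤ} {v : Datum} (h : Push 0 (row (X 0) 0) c v) :
    Push 0 ((envOf X).merge.State 0) c v := by
  rcases h with ⟨o, d, u, q, m, hu, hc, hm, hv⟩ | ⟨_, _, _, _, h, -⟩
  · refine .move o d u q m hu hc ?_ hv
    cases hu with
    | along w hw hw₁ =>
      obtain rfl : w = .rawDatum := by
        have := hw.1; have := hw₁.2
        cases w <;> simp only [Wire.birth, Wire.death] at * <;> first | rfl | omega
      exact state_rawDatum zero_le_one |>.2 hm
    | keep | plain =>
      rw [add_zero] at hm ⊢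
      exact state_rawAddr.2 hm
    | star => exact state_rawDatum zero_le_one |>.2 hm
    | _ => omega
  · cases h <;> omega

/-- The signals of the macro-cell `J` carry the content of the cell `J` of `y`. -/
def Env.Simulates (E : Env) (y : Conf) : Prop :=
  ∀ J p m, E.addr J (.plain p) ∧ E.datum J m ↔ y J = some (p, m)

theorem simulates_decode (X : ℕ → Conf) : (envOf X).Simulates (decode (X 0)) := fun J p m ↦ by
  rw [decode_eq_some_iff]
  constructor
  · rintro ⟨⟨p', m', hp, hp', -⟩, _, -, hm⟩
    exact ⟨hp ▸ hp', hm⟩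
  · rintro ⟨hp, hm⟩
    exact ⟨⟨p, m, rfl, hp, hm⟩, p, hp, hm⟩

/-- The outcome `v` of the whole program at macro-cell `J`. -/
def Env.outcome (E : Env) (J : ℤ) (v : Datum) : Prop :=
  (∃ l : Fin 7, l.val < 5 ∧ E.result l J v) ∨ E.joined J v

namespace Env.Simulates

variable {E : Env} {y : Conf} (hE : E.Simulates y) {J : ℤ} {a : Slot} {v : Datum}
include hE

theorem result_iff_sent {l : Fin 7} (h : ∀ v, E.key J v ↔ v = .plain a) :
    E.result l J v ↔ Sent y l J a v := by
  simp only [result, Sent, h, Datum.plain.injEq, ← hE _ _ _]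
  grind

theorem outcome_iff_pushed (h : ∀ v, E.key J v ↔ v = .plain a) :
    E.outcome J v ↔ Pushed y J (a, v) := by
  simp only [outcome, joined, hE.result_iff_sent h, Pushed]

end Env.Simulates

namespace Env

variable {E : Env} {J : ℤ} {v : Datum}

theorem gather_end (l : Fin 7) : gather l 49023 = 7 := by
  rw [gather_of_ge (by norm_num)]
  rfl

theorem state_end_key : E.State 49023 (7000 * J) v ↔ E.key J v := by
  refine ⟨fun ⟨K, w, hw, hc, hv⟩ ↦ ?_,
    fun hv ↦ ⟨J, .home, ⟨by decide, le_rfl⟩, by simp [Wire.pos], hv⟩⟩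
  have hd := hw.2
  cases w <;> simp only [Wire.pos, gather_end] at hc
  case home =>
    obtain rfl : J = K := by simpa using hc
    exact hv
  case result | joined => omega
  all_goals simp [Wire.death] at hd

theorem state_end_outcome : E.State 49023 (7000 * J + 7) v ↔ E.outcome J v := by
  constructor
  · rintro ⟨K, w, hw, hc, hv⟩
    have hd := hw.2
    cases w <;> simp only [Wire.pos, gather_end] at hc
    case result l =>
      obtain rfl : J = K := by omega
      refine .inl ⟨l, ?_, hv⟩
      by_contra hl
      simp [Wire.death, hl] at hd
    case joined =>
      obtain rfl : J = K := by omega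
      exact .inr hv
    case home => norm_num at hc; omega
    all_goals simp [Wire.death] at hd
  · rintro (⟨l, hl, hv⟩ | hv)
    · exact ⟨J, .result l, ⟨by norm_num [Wire.birth], by simp [Wire.death, hl]⟩,
        by simp only [Wire.pos, gather_end], hv⟩
    · exact ⟨J, .joined, ⟨by decide, le_rfl⟩, by simp only [Wire.pos, gather_end], hv⟩

theorem exists_eq_of_state_end {c : ℤ} (h : E.State 49023 c v) :
    ∃ J, c = 7000 * J ∨ c = 7000 * J + 7 := by
  obtain ⟨J, w, ⟨-, hd⟩, rfl, -⟩ := h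
  refine ⟨J, ?_⟩
  cases w with
  | home => simp [Wire.pos]
  | result | joined => simp [Wire.pos, gather_end]
  | _ => simp [Wire.death] at hd

end Env

namespace IsHistory

variable {X : ℕ → Conf} (hX : IsHistory X)
include hX

theorem push_row {t : ℕ} (ht : t < 49023) {c : ℤ} {v : Datum} (h : row (X (t + 1)) (t + 1) c v) :
    Push t (row (X t) t) c v :=
  (pushed_slot_iff ht).1 (hX t c _ h)

theorem state_merge {t : ℕ} (ht₁ : 1 ≤ t) (ht : t ≤ 7016) {c : ℤ} {v : Datum}
    (h : row (X t) t c v) : (envOf X).merge.State t c v := by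
  induction t, ht₁ using Nat.le_induction generalizing c v with
  | base => exact (push_state_iff (by norm_num)).1 (push_row_zero (hX.push_row (by norm_num) h))
  | succ t _ ih =>
    exact (push_state_iff fun _ _ _ ↦ Iff.rfl).1
      ((hX.push_row (by omega) h).mono fun _ _ ↦ ih (by omega))

theorem exists_incr_of_key {J : ℤ} {v : Datum} (h : (envOf X).key J v) :
    ∃ l, (envOf X).incr l J v :=
  (state_iff (E := (envOf X).merge) (w := .key 0) ⟨le_rfl, by decide⟩ (by decide)
    (by simp [Wire.pos])).1 (hX.state_merge (by norm_num) le_rfl h)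

theorem state {t : ℕ} (ht₁ : 1 ≤ t) (ht : t ≤ 49023) {c : ℤ} {v : Datum}
    (h : row (X t) t c v) : (envOf X).State t c v := by
  rcases le_or_gt 7016 t with h₇ | h₇
  · induction t, h₇ using Nat.le_induction generalizing c v with
    | base =>
      obtain ⟨J, w, hw, rfl, hv⟩ := hX.state_merge (by norm_num) le_rfl h
      refine ⟨J, w, hw, rfl, ?_⟩
      obtain ⟨hb, hd⟩ := hw
      cases w with
      | addr | datum => exact hv
      | key l =>
        have hpos : (Wire.key l).pos 7016 = 0 := by simp [Wire.pos]
        rw [hpos, add_zero] at h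
        exact h
      | _ => simp only [Wire.birth, Wire.death] at hb hd; omega
    | succ t ht' ih =>
      exact (push_state_iff (by omega)).1
        ((hX.push_row (by omega) h).mono fun _ _ ↦ ih (by omega) (by omega))
  · obtain ⟨J, w, hw, rfl, hv⟩ := hX.state_merge ht₁ h₇.le h
    refine ⟨J, w, hw, rfl, ?_⟩
    have hb := hw.1
    cases w with
    | rawAddr | rawDatum | keepSig | plainAddr | starSig | addr | datum | incr => exact hv
    | _ => simp only [Wire.birth] at hb; omega

theorem decode_weakSucc : WeakSucc (decode (X 0)) (decode (X 49023)) := by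
  intro J s hs
  obtain ⟨hk, hv⟩ := decode_eq_some_iff.1 hs
  have hk' := state_end_key.1 (hX.state (by norm_num) le_rfl (row_period.2 hk))
  have hv' := state_end_outcome.1 (hX.state (by norm_num) le_rfl (row_period.2 hv))
  have hkey (v : Datum) : (envOf X).key J v ↔ v = .plain s.1 :=
    ⟨fun h ↦ row.unique h hk', fun h ↦ h ▸ hk'⟩
  exact ((simulates_decode X).outcome_iff_pushed hkey).1 hv'

end IsHistory

theorem ne_none_of_addr {X : ℕ → Conf} {J : ℤ} {v : Datum} (h : (envOf X).addr J v) :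
    decode (X 0) J ≠ none := by
  obtain ⟨p, m, -, hp, hm⟩ := h
  exact Option.ne_none_iff_exists'.2 ⟨(p, m), decode_eq_some_iff.2 ⟨hp, hm⟩⟩

theorem ne_none_of_datum {X : ℕ → Conf} {J : ℤ} {v : Datum} (h : (envOf X).datum J v) :
    decode (X 0) J ≠ none :=
  have ⟨p, hp, hm⟩ := h
  Option.ne_none_iff_exists'.2 ⟨(p, v), decode_eq_some_iff.2 ⟨hp, hm⟩⟩

/-- The place of a signal serving the neighbour on lane `i.2`, counted from the macro-cell on whose
behalf it is sent. -/
def path (i : Wire × Fin 7) (t : ℕ) : ℤ := 7000 * disp i.2 + i.1.pos t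

theorem abs_path_le (i : Wire × Fin 7) (t : ℕ) : |path i t| ≤ 98020 := by
  have h₁ := disp_bounds i.2
  have h₂ := abs_le.1 (i.1.abs_pos_le t)
  rw [abs_le, path]; omega

theorem abs_path_succ_sub_le (i : Wire × Fin 7) (t : ℕ) : |path i (t + 1) - path i t| ≤ 7 := by
  simpa only [path, add_sub_add_left_eq_sub] using i.1.abs_pos_succ_sub_le t

namespace IsHistory

variable {X : ℕ → Conf} (hX : IsHistory X)
include hX

theorem exists_ne_none_of_key {J : ℤ} {v : Datum} (h : (envOf X).key J v) :
    ∃ l, decode (X 0) (J - disp l) ≠ none :=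
  have ⟨l, _, hp, _⟩ := hX.exists_incr_of_key h
  ⟨l, ne_none_of_addr hp⟩

theorem exists_ne_none_of_content {w : Wire} (hw : 2 ≤ w.birth) {J : ℤ} {v : Datum}
    (h : (envOf X).content w J v) : ∃ l, decode (X 0) (J - disp l) ≠ none := by
  cases w with
  | addr => exact ⟨0, by simpa using ne_none_of_addr h⟩
  | datum => exact ⟨0, by simpa using ne_none_of_datum h⟩
  | incr l => exact ⟨l, have ⟨_, hp, _⟩ := h; ne_none_of_addr hp⟩
  | key | home => exact hX.exists_ne_none_of_key h
  | query => exact have ⟨_, hk, _⟩ := h; hX.exists_ne_none_of_key hk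
  | exec => exact have ⟨_, hk, _⟩ := h; hX.exists_ne_none_of_key hk
  | result => exact have ⟨_, _, hk, _⟩ := h; hX.exists_ne_none_of_key hk
  | joined => exact have ⟨_, _, ⟨_, _, hk, _⟩, _⟩ := h; hX.exists_ne_none_of_key hk
  | _ => simp [Wire.birth] at hw

theorem exists_ne_none_of_end {J : ℤ} {v : Datum}
    (h : row (X 49023) 0 (7000 * J) v ∨ row (X 49023) 0 (7000 * J + 7) v) :
    ∃ l, decode (X 0) (J - disp l) ≠ none := by
  have hS {c : ℤ} (h : row (X 49023) 0 c v) := hX.state (by norm_num) le_rfl (row_period.2 h)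
  rcases h with h | h
  · exact hX.exists_ne_none_of_key (state_end_key.1 (hS h))
  · rcases state_end_outcome.1 (hS h) with ⟨l, -, h⟩ | h
    · exact hX.exists_ne_none_of_content (w := .result l) (by simp [Wire.birth]) h
    · exact hX.exists_ne_none_of_content (w := .joined) (by simp [Wire.birth]) h

/-- The ages `0` and `1`, at which the signals do not yet guarantee a complete simulated cell, are
covered by the times `49023` and `49024`. -/
theorem exists_owner {t : ℕ} (ht₂ : 2 ≤ t) (ht : t ≤ 49024) {c : ℤ} {v : Datum}
    (h : row (X t) t c v) : ∃ J i, decode (X 0) J ≠ none ∧ c = 7000 * J + path i t := by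
  suffices ∃ J l, ∃ w : Wire, decode (X 0) (J - disp l) ≠ none ∧ c = 7000 * J + w.pos t by
    obtain ⟨J, l, w, hJ, hc⟩ := this
    exact ⟨J - disp l, (w, l), hJ, by rw [path, hc]; ring⟩
  rcases ht.lt_or_eq with ht | rfl
  · obtain ⟨J, w, hw, hc, hv⟩ := hX.state (by omega) (by omega) h
    by_cases hb : 2 ≤ w.birth
    · obtain ⟨l, hl⟩ := hX.exists_ne_none_of_content hb hv
      exact ⟨J, l, w, hl, hc⟩
    · have hd := hw.2
      cases w <;> simp only [Wire.birth, Wire.death] at hb hd <;> omega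
  · have hY : IsHistory fun t ↦ X (49023 + t) := fun t ↦ hX (49023 + t)
    obtain ⟨J, w, ⟨hb, hd⟩, hc, hv⟩ := hY.state le_rfl (by norm_num) h
    suffices hl : ∃ l, decode (X 0) (J - disp l) ≠ none by
      obtain ⟨l, hl⟩ := hl
      refine ⟨J, l, w, hl, hc.trans ?_⟩
      cases w <;> first | rfl | simp [Wire.birth] at hb
    cases w with
    | rawDatum => exact hX.exists_ne_none_of_end (.inr hv)
    | keepSig => exact have ⟨_, _, hp⟩ := hv; hX.exists_ne_none_of_end (.inl hp)
    | plainAddr => exact have ⟨_, _, hp⟩ := hv; hX.exists_ne_none_of_end (.inl hp)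
    | starSig => exact have ⟨_, _, hp⟩ := hv; hX.exists_ne_none_of_end (.inr hp)
    | rawAddr => simp [Wire.death] at hd
    | _ => simp [Wire.birth] at hb

theorem exists_row_of_row_succ {t : ℕ} (ht₁ : 7035 ≤ t) (ht : t < 49023) {c : ℤ} {v : Datum}
    (h : row (X (t + 1)) (t + 1) c v) :
    ∃ J m, (c = 7000 * J ∧ row (X t) t (7000 * J) m) ∨
      c = 7000 * J + zigzag (t + 1 - 7035) ∧ row (X t) t (7000 * J + zigzag (t - 7035)) m := by
  have hg (l : Fin 7) := gather_of_ge (l := l) (t := t) ht₁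
  have hg' (l : Fin 7) := gather_of_ge (l := l) (t := t + 1) (by omega)
  rcases hX.push_row ht h with ⟨o, d, u, q, m, hu, hc, hm, -⟩ | ⟨_, _, _, _, ho, -⟩
  · refine ⟨q, m, ?_⟩
    cases hu with
    | along w hw hw₁ =>
      have hd := hw.2
      cases w <;> simp only [Wire.pos, hg, hg'] at hc hm
      case home =>
        rw [if_neg (by omega), if_neg (by omega)] at hc
        rw [if_neg (by omega), add_zero] at hm
        exact .inl ⟨by omega, hm⟩
      case result | joined => exact .inr ⟨by omega, hm⟩
      all_goals simp only [Wire.death] at hd; omega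
    | _ => omega
  · cases ho <;> omega

/-- The two rows are those of the signals `home` and `result` or `joined`, traced back in time. -/
theorem exists_row_of_decode {J : ℤ} (h : decode (X 49023) J ≠ none) {t : ℕ} (ht₁ : 7035 ≤ t)
    (ht : t ≤ 49023) : (∃ v, row (X t) t (7000 * J) v) ∧
      ∃ v, row (X t) t (7000 * J + zigzag (t - 7035)) v := by
  induction ht using Nat.decreasingInduction with
  | self =>
    obtain ⟨s, hs⟩ := Option.ne_none_iff_exists'.1 h
    obtain ⟨hk, hv⟩ := decode_eq_some_iff.1 hs
    exact ⟨⟨_, hk⟩, _, hv⟩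
  | of_succ t ht ih =>
    obtain ⟨⟨v, hv⟩, v', hv'⟩ := ih (by omega)
    have hz := zigzag_bounds (t + 1 - 7035)
    obtain ⟨K, m, ⟨hK, hm⟩ | ⟨hK, -⟩⟩ := hX.exists_row_of_row_succ ht₁ ht hv
    · obtain ⟨K', m', ⟨hK', -⟩ | ⟨hK', hm'⟩⟩ := hX.exists_row_of_row_succ ht₁ ht hv'
      · omega
      · obtain rfl : J = K := by omega
        obtain rfl : J = K' := by omega
        exact ⟨⟨m, hm⟩, m', hm'⟩
    · omega

end IsHistory

/-! ### The hierarchy of simulations -/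

/-- The cell which is simulated, through `n` levels, by a macro-cell whose place `0` is the cell `c`
and whose age is `0` at time `τ`. -/
noncomputable def level (X : ℕ → Conf) : ℕ → ℤ → ℕ → Cell
  | 0, c, τ => X τ c
  | n + 1, c, τ => decode (fun J ↦ level X n (c + 7000 ^ n * J) τ) 0

/-- The history of the configuration simulated through `n` levels, with origin `(c, τ)`. -/
noncomputable def levelHistory (X : ℕ → Conf) (n : ℕ) (c : ℤ) (τ : ℕ) (t : ℕ) : Conf :=
  fun J ↦ level X n (c + 7000 ^ n * J) (τ + t * 49023 ^ n)

theorem decode_translate (x : Conf) (J K : ℤ) :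
    decode (fun c ↦ x (7000 * J + c)) K = decode x (J + K) := by
  ext s
  simp only [decode_eq_some_iff, row, slot, Int.cast_add, Int.cast_mul, mul_add,
    add_assoc]
  have h₀ (J : ℤ) : ((7000 : ℤ) : ZMod 7000) * J = 0 := by
    rw [show ((7000 : ℤ) : ZMod 7000) = 0 from rfl, zero_mul]
  simp only [h₀, zero_add]

theorem decode_level (X : ℕ → Conf) (n : ℕ) (c J : ℤ) (τ : ℕ) :
    decode (fun K ↦ level X n (c + 7000 ^ n * K) τ) J =
      level X (n + 1) (c + 7000 ^ (n + 1) * J) τ := by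
  rw [level, ← add_zero J, ← decode_translate, add_zero]
  congr! 3
  ring

theorem decode_levelHistory (X : ℕ → Conf) (n : ℕ) (c : ℤ) (τ t : ℕ) :
    decode (levelHistory X n c τ t) =
      fun J ↦ level X (n + 1) (c + 7000 ^ (n + 1) * J) (τ + t * 49023 ^ n) :=
  funext fun _ ↦ decode_level ..

theorem isHistory_translate {X : ℕ → Conf} (hX : IsHistory X) (c : ℤ) (τ : ℕ) :
    IsHistory fun t J ↦ X (τ + t) (c + J) := by
  intro t J s hs
  have := hX (τ + t) (c + J) s hs
  simpa only [Pushed, Sent, add_sub_assoc] using this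

theorem isHistory_levelHistory {X : ℕ → Conf} (hX : IsHistory X) (n : ℕ) (c : ℤ) (τ : ℕ) :
    IsHistory (levelHistory X n c τ) := by
  induction n generalizing c τ with
  | zero =>
    have h : levelHistory X 0 c τ = fun t J ↦ X (τ + t) (c + J) := by
      ext; simp [levelHistory, level]
    exact h ▸ isHistory_translate hX c τ
  | succ n ih =>
    intro t
    have h := (ih c (τ + t * 49023 ^ (n + 1))).decode_weakSucc
    rw [decode_levelHistory, decode_levelHistory, zero_mul, add_zero, add_assoc,
      show t * 49023 ^ (n + 1) + 49023 * 49023 ^ n = (t + 1) * 49023 ^ (n + 1) by ring] at h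
    exact h

theorem exists_owner_level {X : ℕ → Conf} (hX : IsHistory X) {n : ℕ} {c : ℤ} {τ : ℕ}
    (hτ : 2 * 49023 ^ (n + 1) ≤ τ) (h : level X n c τ ≠ none) :
    ∃ i, ∃ t ≤ 49024, level X (n + 1) (c - 7000 ^ n * path i t) (τ - t * 49023 ^ n) ≠ none := by
  obtain ⟨⟨p, m⟩, hs⟩ := Option.ne_none_iff_exists'.1 h
  obtain ⟨a, ha⟩ := ZMod.intCast_surjective p.1
  obtain ⟨t, ht₂, ht, hp⟩ : ∃ t : ℕ, 2 ≤ t ∧ t ≤ 49024 ∧ (t : ZMod 49023) = p.2 := by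
    have := p.2.val_lt
    rcases le_or_gt 2 p.2.val with h₂ | h₂
    · exact ⟨p.2.val, h₂, by omega, ZMod.natCast_zmod_val _⟩
    · exact ⟨p.2.val + 49023, by omega, by omega, by
        rw [Nat.cast_add, ZMod.natCast_zmod_val, CharP.cast_eq_zero, add_zero]⟩
  have hτ' : t * 49023 ^ n ≤ τ := by
    rw [pow_succ] at hτ
    nlinarith [Nat.mul_le_mul_right (49023 ^ n) ht]
  obtain ⟨J, i, hJ, rfl⟩ := (isHistory_levelHistory hX n (c - 7000 ^ n * a)
    (τ - t * 49023 ^ n)).exists_owner ht₂ ht (c := a) (v := m)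
      (by rw [row, levelHistory, Nat.sub_add_cancel hτ', sub_add_cancel, hs, slot, ha, hp])
  refine ⟨i, t, ht, ?_⟩
  rw [decode_levelHistory, zero_mul, add_zero] at hJ
  convert hJ using 2
  ring

theorem exists_slot_of_level {X : ℕ → Conf} (hX : IsHistory X) {n : ℕ} {c : ℤ} {τ : ℕ}
    (hτ : 49023 ^ (n + 1) ≤ τ) (h : level X (n + 1) c τ ≠ none) {t : ℕ} (ht₁ : 7035 ≤ t)
    (ht : t ≤ 49023) {J : ℤ} (hJ : J = 0 ∨ zigzag (t - 7035) = J) :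
    ∃ v, level X n (c + 7000 ^ n * J) (τ - (49023 - t) * 49023 ^ n) = some (slot J t, v) := by
  have hτ' : τ - (49023 - t) * 49023 ^ n = τ - 49023 ^ (n + 1) + t * 49023 ^ n := by
    have := Nat.mul_le_mul_right (49023 ^ n) ht
    rw [pow_succ'] at hτ ⊢
    rw [Nat.sub_mul]
    omega
  have h₀ : decode (levelHistory X n c (τ - 49023 ^ (n + 1)) 49023) 0 ≠ none := by
    simpa only [decode_levelHistory, ← pow_succ', Nat.sub_add_cancel hτ, mul_zero, add_zero]
  obtain ⟨hhome, houtcome⟩ := (isHistory_levelHistory hX n _ _).exists_row_of_decode h₀ ht₁ ht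
  simp only [mul_zero, zero_add] at hhome houtcome
  rw [hτ']
  rcases hJ with rfl | rfl
  exacts [hhome, houtcome]

theorem exists_nearest_multiple {b : ℤ} (hb : 0 < b) (δ : ℤ) : ∃ k, |2 * (δ - b * k)| ≤ b := by
  refine ⟨(2 * δ + b) / (2 * b), ?_⟩
  have h₁ := Int.mul_ediv_self_le (x := 2 * δ + b) (k := 2 * b) (by omega)
  have h₂ := Int.lt_mul_ediv_self_add (x := 2 * δ + b) (k := 2 * b) (by omega)
  rw [mul_assoc] at h₁ h₂
  rw [abs_le]; omega

theorem slot_inj {J K : ℤ} {t u : ℕ} (h : slot J t = slot K u) (hJ : 0 ≤ J ∧ J < 7000)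
    (hK : 0 ≤ K ∧ K < 7000) (ht : t ∈ Set.Icc 7035 49023) (hu : u ∈ Set.Icc 7035 49023) :
    J = K ∧ t = u := by
  obtain ⟨hJK, htu⟩ := Prod.mk_inj.1 h
  obtain ⟨q, hq⟩ := intCast_eq_intCast_iff_exists.1 hJK
  have := (ZMod.natCast_eq_natCast_iff' _ _ _).1 htu
  rw [Set.mem_Icc] at ht hu
  omega

/-- While one macro-cell is at its place `0`, the bouncing signal of another one visits every
place, even if the periods of the two are shifted by about half a period. -/
theorem exists_meeting {J k : ℤ} (hJ₀ : 0 ≤ J) (hJ : J < 7000) (hk : |k| ≤ 24512) :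
    ∃ t₁ t₂ : ℕ, t₁ ∈ Set.Icc 7035 49023 ∧ t₂ ∈ Set.Icc 7035 49023 ∧ (t₁ : ℤ) - t₂ = k ∧
      (J = 0 ∨ zigzag (t₁ - 7035) = J) := by
  rw [abs_le] at hk
  simp only [Set.mem_Icc]
  obtain rfl | hJ' := hJ₀.eq_or_lt
  · exact ⟨(7035 + max 0 k).toNat, (7035 + max 0 (-k)).toNat, by omega, by omega, by omega,
      .inl rfl⟩
  · obtain ⟨w, hw⟩ : ∃ w, w = max 0 k := ⟨_, rfl⟩
    refine ⟨(7035 + w + (J - 7 - w) % 13996).toNat, (7035 + w + (J - 7 - w) % 13996 - k).toNat,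
      by omega, by omega, by omega, .inr ?_⟩
    unfold zigzag; omega

theorem exists_scaled_meeting {a b γ δ : ℤ} (ha : 0 < a) (hb : 0 < b) (hγ₀ : 0 ≤ γ)
    (hγ : γ < 7000 * a) (hδ : |2 * δ| ≤ 49023 * b) :
    ∃ (J : ℤ) (t₁ t₂ : ℕ), t₁ ∈ Set.Icc 7035 49023 ∧ t₂ ∈ Set.Icc 7035 49023 ∧ 0 ≤ J ∧ J < 7000 ∧
      |γ - a * J| < a ∧ |2 * (δ + (t₁ - t₂) * b)| ≤ b ∧ (J = 0 ∨ zigzag (t₁ - 7035) = J) := by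
  obtain ⟨k, hk⟩ := exists_nearest_multiple hb δ
  have hk' : |-k| ≤ 24512 := by
    rw [abs_le] at hδ hk ⊢
    have hk₁ : b * k ≤ b * 24512 := by omega
    have hk₂ : b * (-24512) ≤ b * k := by omega
    have := le_of_mul_le_mul_left hk₁ hb
    have := le_of_mul_le_mul_left hk₂ hb
    omega
  have hJ : 0 ≤ γ / a ∧ γ / a < 7000 :=
    ⟨Int.ediv_nonneg hγ₀ ha.le, Int.ediv_lt_of_lt_mul ha hγ⟩
  obtain ⟨t₁, t₂, ht₁, ht₂, hk₁, hz⟩ := exists_meeting hJ.1 hJ.2 hk'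
  refine ⟨γ / a, t₁, t₂, ht₁, ht₂, hJ.1, hJ.2, ?_, ?_, hz⟩
  · have h₁ := Int.mul_ediv_self_le (x := γ) ha.ne'
    have h₂ := Int.lt_mul_ediv_self_add (x := γ) ha
    rw [abs_lt]; omega
  · rwa [hk₁, neg_mul, mul_comm k, ← sub_eq_add_neg]

/-- Decoded macro-cells of one level exclude each other in space and time: otherwise, the bouncing
signal of one would meet the signal `home` of the other. -/
theorem level_exclusion {X : ℕ → Conf} (hX : IsHistory X) {n : ℕ} {c₁ c₂ : ℤ} {τ₁ τ₂ : ℕ}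
    (h₁ : level X n c₁ τ₁ ≠ none) (h₂ : level X n c₂ τ₂ ≠ none) (hc : |c₂ - c₁| < 7000 ^ n)
    (hτ : |2 * ((τ₁ : ℤ) - τ₂)| ≤ 49023 ^ n) (hτ₁ : 2 * 49023 ^ n ≤ τ₁) (hτ₂ : 2 * 49023 ^ n ≤ τ₂) :
    c₁ = c₂ ∧ τ₁ = τ₂ := by
  induction n generalizing c₁ c₂ τ₁ τ₂ with
  | zero =>
    rw [pow_zero, abs_le] at hτ
    rw [pow_zero, abs_lt] at hc
    omega
  | succ n ih =>
    wlog hle : c₁ ≤ c₂ generalizing c₁ c₂ τ₁ τ₂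
    · obtain ⟨hc', hτ'⟩ := this h₂ h₁ (abs_sub_comm c₂ c₁ ▸ hc)
        (by rwa [← neg_sub, mul_neg, abs_neg]) hτ₂ hτ₁ (by omega)
      exact ⟨hc'.symm, hτ'.symm⟩
    have hb : (0 : ℤ) < 49023 ^ n := by positivity
    rw [pow_succ'] at hc hτ
    obtain ⟨J, t₁, t₂, ht₁, ht₂, hJ₀, hJ, hcJ, hτJ, hz⟩ := exists_scaled_meeting
      (by positivity) hb (sub_nonneg.2 hle) ((le_abs_self _).trans_lt hc) hτ
    obtain ⟨v₁, hv₁⟩ := exists_slot_of_level hX (by omega) h₁ ht₁.1 ht₁.2 hz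
    obtain ⟨v₂, hv₂⟩ := exists_slot_of_level hX (by omega) h₂ ht₂.1 ht₂.2 (.inl rfl)
    have hs (τ t : ℕ) (ht : t ∈ Set.Icc 7035 49023) (hτ : 2 * 49023 ^ (n + 1) ≤ τ) :
        ((τ - (49023 - t) * 49023 ^ n : ℕ) : ℤ) = τ - (49023 - t) * 49023 ^ n ∧
          2 * 49023 ^ n ≤ τ - (49023 - t) * 49023 ^ n := by
      have := Nat.mul_le_mul_right (49023 ^ n) (Nat.sub_le 49023 t)
      rw [pow_succ'] at hτ
      have : 0 < 49023 ^ n := by positivity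
      refine ⟨?_, by omega⟩
      rw [Nat.cast_sub (by omega)]
      push_cast [Nat.cast_sub ht.2]; rfl
    rw [mul_zero, add_zero] at hv₂
    obtain ⟨hc', hτ'⟩ := ih (ne_of_eq_of_ne hv₁ nofun) (ne_of_eq_of_ne hv₂ nofun)
      (by rwa [← sub_sub]) (by
        rw [(hs τ₁ t₁ ht₁ hτ₁).1, (hs τ₂ t₂ ht₂ hτ₂).1]
        convert hτJ using 3; ring) (hs τ₁ t₁ ht₁ hτ₁).2 (hs τ₂ t₂ ht₂ hτ₂).2
    rw [hc', hτ', hv₂, Option.some_inj, Prod.mk_inj] at hv₁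
    obtain ⟨rfl, rfl⟩ := slot_inj hv₁.1 (by omega) (by omega) ht₂ ht₁
    have hτ₁' := (hs τ₁ _ ht₁ hτ₁).1
    rw [hτ', (hs τ₂ _ ht₁ hτ₂).1] at hτ₁'
    exact ⟨by simpa using hc', by omega⟩

/-! ### The density of the cells which are not blank -/

/-- The strip which contains the macro-cells of level `n` on whose behalf the cells `(c, τ)` with
`14 * τ - β * c = g`, `u ≤ c ≤ w` and `4 * 49023 ^ N ≤ τ` work. -/
def Window (β g u w : ℤ) (N n : ℕ) (p : ℤ × ℕ) : Prop :=
  |14 * (p.2 : ℤ) - β * p.1 - g| ≤ 20 * 49023 ^ n ∧ u - 15 * 7000 ^ n ≤ p.1 ∧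
    p.1 ≤ w + 15 * 7000 ^ n ∧ 4 * 49023 ^ N ≤ p.2 + 2 * 49023 ^ n

section Window

variable {β g u w : ℤ} {N n : ℕ}

theorem Window.owner (hβ : β = 0 ∨ β = 1) {p : ℤ × ℕ} (h : Window β g u w N n p) {t : ℕ}
    (ht : t ≤ 49024) (htp : t * 49023 ^ n ≤ p.2) {q : ℤ} (hq : |q| ≤ 98020) :
    Window β g u w N (n + 1) (p.1 - 7000 ^ n * q, p.2 - t * 49023 ^ n) := by
  obtain ⟨hL, hu, hw, hτ⟩ := h
  have hab : (7000 : ℤ) ^ n ≤ 49023 ^ n := pow_le_pow_left₀ (by norm_num) (by norm_num) n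
  have haq : |(7000 : ℤ) ^ n * q| ≤ 7000 ^ n * 98020 := by
    rw [abs_mul, abs_of_pos (by positivity)]; gcongr
  have htb : t * 49023 ^ n ≤ 49024 * 49023 ^ n := by gcongr
  have htb' : (t : ℤ) * 49023 ^ n ≤ 49024 * 49023 ^ n := by exact_mod_cast htb
  have htb₀ : 0 ≤ (t : ℤ) * 49023 ^ n := by positivity
  have : (0 : ℤ) < 7000 ^ n := by positivity
  simp only [Window, abs_le, pow_succ, Nat.cast_sub htp, Nat.cast_mul, Nat.cast_pow,
    Nat.cast_ofNat] at *
  refine ⟨?_, by omega, by omega, by omega⟩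
  rcases hβ with rfl | rfl <;> omega

/-- Along a path the form `14 * τ - β * c` grows by at least `7 * 49023 ^ n` per step. -/
theorem Window.duration_le (hβ : β = 0 ∨ β = 1) {c : ℤ} {τ t d : ℕ} {f : ℕ → ℤ}
    (hf : ∀ t, |f (t + 1) - f t| ≤ 7)
    (h₁ : Window β g u w N n (c + 7000 ^ n * f t, τ + t * 49023 ^ n))
    (h₂ : Window β g u w N n (c + 7000 ^ n * f (t + d), τ + (t + d) * 49023 ^ n)) : d ≤ 5 := by
  have hfd : f (t + d) - f t ≤ 7 * d := by
    clear h₂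
    induction d with
    | zero => simp
    | succ d ih =>
      have := (abs_le.1 (hf (t + d))).2
      rw [← add_assoc]
      push_cast
      omega
  have hab : (7000 : ℤ) ^ n ≤ 49023 ^ n := pow_le_pow_left₀ (by norm_num) (by norm_num) n
  have hslope : (7000 : ℤ) ^ n * (f (t + d) - f t) ≤ 49023 ^ n * (7 * d) := by
    refine (mul_le_mul_of_nonneg_left hfd (by positivity)).trans ?_
    gcongr
  have hb : (0 : ℤ) < 49023 ^ n := by positivity
  have : 0 ≤ 49023 ^ n * (7 * (d : ℤ)) := by positivity
  have h₁ := (abs_le.1 h₁.1).1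
  have h₂ := (abs_le.1 h₂.1).2
  push_cast at h₁ h₂
  have : (49023 : ℤ) ^ n * (7 * d) ≤ 49023 ^ n * 40 := by
    rcases hβ with rfl | rfl <;> nlinarith
  have := le_of_mul_le_mul_left this hb
  omega

end Window

theorem card_le_of_forall_le_add {ι : Type*} {F : Finset ι} {t : ι → ℕ} {k : ℕ}
    (hinj : Set.InjOn t F) (h : ∀ p ∈ F, ∀ q ∈ F, t p ≤ t q → t q ≤ t p + k) :
    F.card ≤ k + 1 := by
  rcases F.eq_empty_or_nonempty with rfl | hF
  · simp
  obtain ⟨p, hp, hmin⟩ := F.exists_min_image t hF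
  refine (Finset.card_le_card_of_injOn (t := Finset.Icc (t p) (t p + k)) t (fun q hq ↦ ?_)
    hinj).trans (by simp; omega)
  simpa using ⟨hmin q hq, h p hp q hq (hmin q hq)⟩

theorem abs_sub_lt_of_ediv_eq {a b d : ℤ} (hd : 0 < d) (h : a / d = b / d) : |a - b| < d := by
  have ha := Int.mul_ediv_add_emod a d
  have hb := Int.mul_ediv_add_emod b d
  have := Int.emod_lt_of_pos a hd
  have := Int.emod_lt_of_pos b hd
  have := Int.emod_nonneg a hd.ne'
  have := Int.emod_nonneg b hd.ne'
  rw [h] at ha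
  rw [abs_lt]
  omega

theorem card_le_mul_card_mul_card_image {α ι γ : Type*} [Fintype ι] [DecidableEq ι] [DecidableEq γ]
    {F : Finset α} {i : α → ι} {g : α → γ} {k : ℕ}
    (h : ∀ j a, (F.filter fun p ↦ i p = j ∧ g p = a).card ≤ k) :
    F.card ≤ k * (Fintype.card ι * (F.image g).card) := by
  have hk := Finset.card_le_mul_card_image (f := fun p ↦ (i p, g p)) F k fun a _ ↦ by
    simpa only [Prod.ext_iff] using h a.1 a.2
  have himage : (F.image fun p ↦ (i p, g p)) ⊆ Finset.univ ×ˢ F.image g :=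
    Finset.image_subset_iff.2 fun p hp ↦
      Finset.mk_mem_product (Finset.mem_univ _) (Finset.mem_image_of_mem g hp)
  refine hk.trans (Nat.mul_le_mul_left k ((Finset.card_le_card himage).trans_eq ?_))
  rw [Finset.card_product, Finset.card_univ]

section Count

variable {X : ℕ → Conf} {β g u w : ℤ} {N n : ℕ}

theorem exists_owner_window (hX : IsHistory X) (hβ : β = 0 ∨ β = 1) (hn : n < N) {p : ℤ × ℕ}
    (hp : level X n p.1 p.2 ≠ none) (hW : Window β g u w N n p) :
    ∃ i t, t * 49023 ^ n ≤ p.2 ∧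
      level X (n + 1) (p.1 - 7000 ^ n * path i t) (p.2 - t * 49023 ^ n) ≠ none ∧
      Window β g u w N (n + 1) (p.1 - 7000 ^ n * path i t, p.2 - t * 49023 ^ n) := by
  have hτ : 2 * 49023 ^ (n + 1) ≤ p.2 := by
    have hW := hW.2.2.2
    have h₁ : 49023 ^ (n + 1) ≤ 49023 ^ N := Nat.pow_le_pow_right (by norm_num) hn
    rw [pow_succ] at h₁ ⊢
    omega
  obtain ⟨i, t, ht, h⟩ := exists_owner_level hX hτ hp
  have htp : t * 49023 ^ n ≤ p.2 := by
    have := Nat.mul_le_mul_right (49023 ^ n) ht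
    rw [pow_succ] at hτ
    omega
  exact ⟨i, t, htp, h, hW.owner hβ ht htp (abs_path_le i t)⟩

/-- An owner has at most `6` cells per path in the strip, and there are `56 * 7` paths. -/
theorem exists_card_le_mul_card (hX : IsHistory X) (hβ : β = 0 ∨ β = 1) (hn : n < N)
    {F : Finset (ℤ × ℕ)} (hF : ∀ p ∈ F, level X n p.1 p.2 ≠ none ∧ Window β g u w N n p) :
    ∃ G : Finset (ℤ × ℕ), (∀ p ∈ G, level X (n + 1) p.1 p.2 ≠ none ∧ Window β g u w N (n + 1) p) ∧
      F.card ≤ 2352 * G.card := by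
  have : Nonempty (Wire × Fin 7) := ⟨.rawAddr, 0⟩
  choose! i t ht hlevel hwindow using fun p hp ↦
    exists_owner_window hX hβ hn (hF p hp).1 (hF p hp).2
  let owner (p : ℤ × ℕ) := (p.1 - 7000 ^ n * path (i p) (t p), p.2 - t p * 49023 ^ n)
  refine ⟨F.image owner, Finset.forall_mem_image.2 fun p hp ↦ ⟨hlevel p hp, hwindow p hp⟩, ?_⟩
  have hfibre (j a) : (F.filter fun p ↦ i p = j ∧ owner p = a).card ≤ 6 := by
    have hrec : ∀ p ∈ F.filter fun p ↦ i p = j ∧ owner p = a,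
        p = (a.1 + 7000 ^ n * path j (t p), a.2 + t p * 49023 ^ n) := by
      intro p hp
      obtain ⟨hpF, rfl, rfl⟩ := Finset.mem_filter.1 hp
      exact Prod.ext (sub_add_cancel ..).symm (Nat.sub_add_cancel (ht p hpF)).symm
    refine card_le_of_forall_le_add (t := t) (fun p hp q hq h ↦ ?_) fun p hp q hq h ↦ ?_
    · rw [hrec p hp, hrec q hq, h]
    · obtain ⟨d, hd⟩ := exists_add_of_le h
      have hWp := (hF p (Finset.filter_subset _ _ hp)).2
      have hWq := (hF q (Finset.filter_subset _ _ hq)).2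
      rw [hrec p hp] at hWp
      rw [hrec q hq, hd] at hWq
      have := hWp.duration_le hβ (abs_path_succ_sub_le j) hWq
      omega
  have := card_le_mul_card_mul_card_image hfibre
  rw [Fintype.card_prod, Wire.card_eq, Fintype.card_fin] at this
  omega

theorem exists_card_le_pow_mul_card (hX : IsHistory X) (hβ : β = 0 ∨ β = 1) (hn : n ≤ N)
    {F : Finset (ℤ × ℕ)} (hF : ∀ p ∈ F, level X 0 p.1 p.2 ≠ none ∧ Window β g u w N 0 p) :
    ∃ G : Finset (ℤ × ℕ), (∀ p ∈ G, level X n p.1 p.2 ≠ none ∧ Window β g u w N n p) ∧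
      F.card ≤ 2352 ^ n * G.card := by
  induction n with
  | zero => exact ⟨F, hF, by simp⟩
  | succ n ih =>
    obtain ⟨G, hG, hFG⟩ := ih (by omega)
    obtain ⟨G', hG', hGG'⟩ := exists_card_le_mul_card hX hβ (by omega) hG
    exact ⟨G', hG', hFG.trans (by rw [pow_succ, mul_assoc]; gcongr)⟩

/-- By exclusion, a column of width `7000 ^ N` meets a strip of height `6 * 49023 ^ N` for the form
`14 * τ - β * c` in at most one macro-cell of level `N`. -/
theorem card_le_of_level (hX : IsHistory X) (hβ : β = 0 ∨ β = 1) {F : Finset (ℤ × ℕ)}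
    (hF : ∀ p ∈ F, level X N p.1 p.2 ≠ none ∧ Window β g u w N N p) :
    F.card ≤ 8 * (w / 7000 ^ N - u / 7000 ^ N + 31).toNat := by
  have ha : (0 : ℤ) < 7000 ^ N := by positivity
  have hb : (0 : ℤ) < 6 * 49023 ^ N := by positivity
  have hab : (7000 : ℤ) ^ N ≤ 49023 ^ N := pow_le_pow_left₀ (by norm_num) (by norm_num) N
  let column (p : ℤ × ℕ) := p.1 / 7000 ^ N
  let band (p : ℤ × ℕ) := (14 * (p.2 : ℤ) - β * p.1 - g) / (6 * 49023 ^ N)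
  have hmem : ∀ p ∈ F, (column p, band p) ∈
      Finset.Icc (u / 7000 ^ N - 15) (w / 7000 ^ N + 15) ×ˢ Finset.Icc (-4 : ℤ) 3 := by
    intro p hp
    obtain ⟨hL, hu, hw, -⟩ := (hF p hp).2
    obtain ⟨hL₁, hL₂⟩ := abs_le.1 hL
    rw [Finset.mem_product, Finset.mem_Icc, Finset.mem_Icc, ← Int.sub_mul_ediv_right _ _ ha.ne',
      ← Int.add_mul_ediv_right _ _ ha.ne']
    refine ⟨⟨Int.ediv_le_ediv ha hu, Int.ediv_le_ediv ha hw⟩, ?_, ?_⟩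
    · rw [Int.le_ediv_iff_mul_le hb]; omega
    · rw [← Int.lt_add_one_iff, Int.ediv_lt_iff_lt_mul hb]; omega
  have hinj : Set.InjOn (fun p ↦ (column p, band p)) F := by
    intro p hp q hq hpq
    obtain ⟨hcolumn, hband⟩ := Prod.ext_iff.1 hpq
    have hτ {r} (hr : r ∈ F) : 2 * 49023 ^ N ≤ r.2 := by have := (hF r hr).2.2.2.2; omega
    have hc := abs_sub_lt_of_ediv_eq ha hcolumn
    have hL := abs_sub_lt_of_ediv_eq hb hband
    refine Prod.ext_iff.2 (level_exclusion hX (hF p hp).1 (hF q hq).1 ?_ ?_ (hτ hp) (hτ hq))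
    · rwa [abs_sub_comm]
    · rw [abs_lt] at hc hL
      rw [abs_le]
      rcases hβ with rfl | rfl <;> constructor <;> omega
  refine (Finset.card_le_card_of_injOn _ hmem hinj).trans_eq ?_
  rw [Finset.card_product, Int.card_Icc, Int.card_Icc, mul_comm]
  congr 2
  ring

theorem card_le_of_ne_none (hX : IsHistory X) (hβ : β = 0 ∨ β = 1) {F : Finset (ℤ × ℕ)}
    (hF : ∀ p ∈ F, X p.2 p.1 ≠ none ∧ 14 * (p.2 : ℤ) - β * p.1 = g ∧ u ≤ p.1 ∧ p.1 ≤ w ∧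
      4 * 49023 ^ N ≤ p.2) (huw : u ≤ w) :
    (F.card : ℝ) ≤ 8 * 2352 ^ N * ((w - u) / 7000 ^ N + 32) := by
  obtain ⟨G, hG, hFG⟩ := exists_card_le_pow_mul_card (g := g) (u := u) (w := w)
    (N := N) hX hβ le_rfl fun p hp ↦ by
    obtain ⟨hne, hg, hu, hw, hτ⟩ := hF p hp
    refine ⟨hne, by simp [hg], ?_, ?_, ?_⟩ <;> omega
  have hcard : (F.card : ℝ) ≤ 2352 ^ N * (8 * (w / 7000 ^ N - u / 7000 ^ N + 31).toNat) := by
    exact_mod_cast hFG.trans (Nat.mul_le_mul_left _ (card_le_of_level hX hβ hG))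
  have hcolumns : ((w / 7000 ^ N - u / 7000 ^ N + 31).toNat : ℝ) ≤ (w - u) / 7000 ^ N + 32 := by
    have hdiv : u / 7000 ^ N ≤ w / 7000 ^ N := Int.ediv_le_ediv (by positivity) huw
    have hw := (Int.ediv_mul_le w (by positivity : (7000 : ℤ) ^ N ≠ 0))
    have hu := Int.lt_ediv_add_one_mul_self u (by positivity : (0 : ℤ) < 7000 ^ N)
    have hnat : (((w / 7000 ^ N - u / 7000 ^ N + 31).toNat : ℤ) : ℝ) =
        ((w / 7000 ^ N : ℤ) : ℝ) - ((u / 7000 ^ N : ℤ) : ℝ) + 31 := by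
      rw [Int.toNat_of_nonneg (by omega)]
      push_cast
      rfl
    rw [← Int.cast_natCast, hnat, ← sub_le_iff_le_add, le_div_iff₀ (by positivity)]
    have hwu : (w / 7000 ^ N - u / 7000 ^ N + 31 - 32) * 7000 ^ N ≤ w - u := by linarith
    exact_mod_cast hwu
  calc (F.card : ℝ) ≤ _ := hcard
    _ ≤ 2352 ^ N * (8 * ((w - u) / 7000 ^ N + 32)) := by gcongr
    _ = _ := by ring

end Count

/-! ### Faithful simulation -/

namespace Env

variable {E : Env}

theorem State.along_of_le {t s : ℕ} {J : ℤ} {v : Datum} {w : Wire}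
    (h : E.State t (7000 * J + w.pos t) v) (hb : w.birth ≤ t) (hts : t ≤ s) (hs : s ≤ w.death) :
    E.State s (7000 * J + w.pos s) v := by
  induction s, hts using Nat.le_induction with
  | base => exact h
  | succ s hts ih => exact (ih (by omega)).along ⟨by omega, by omega⟩ ⟨by omega, hs⟩

/-- The signals carry no contradictory data. -/
structure IsFunctional (E : Env) : Prop where
  content (w : Wire) (J : ℤ) : {v | E.content w J v}.Subsingleton
  incr (J : ℤ) : {v | ∃ l, E.incr l J v}.Subsingleton
  outcome (J : ℤ) : {v | E.outcome J v}.Subsingleton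

theorem IsFunctional.state_death (hE : E.IsFunctional) (w : Wire) (J : ℤ) :
    {v | E.State w.death (7000 * J + w.pos w.death) v}.Subsingleton := by
  have hend : w.death = 49023 → w.pos w.death = 7 →
      {v | E.State w.death (7000 * J + w.pos w.death) v}.Subsingleton := fun hd hp ↦ by
    rw [hp, hd]
    simpa only [state_end_outcome] using hE.outcome J
  have hiso (hd : w.death < 7010 ∨ 7016 ≤ w.death ∧ w.death < 7028) (hb : w.birth ≤ w.death) :
      {v | E.State w.death (7000 * J + w.pos w.death) v}.Subsingleton := by
    simpa only [state_iff ⟨hb, le_rfl⟩ hd rfl] using hE.content w J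
  cases w with
  | incr l => exact fun v h v' h' ↦ hE.incr J (h.incr rfl rfl) (h'.incr rfl rfl)
  | home => simpa [Wire.pos, Wire.death, state_end_key, Env.content] using hE.content .home J
  | joined => exact hend rfl (gather_end 6)
  | result l =>
    by_cases hl : l.val < 5
    · have hd : (Wire.result l).death = 49023 := if_pos hl
      exact hend hd (by rw [hd]; exact gather_end l)
    · exact hiso (by simp [Wire.death, hl]) (by simp [Wire.death, Wire.birth, hl])
  | _ => exact hiso (by simp [Wire.death]) (by simp [Wire.death, Wire.birth])

/-- Signals that meet stay together, so their contents can be compared at their death. -/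
theorem IsFunctional.state_unique (hE : E.IsFunctional) {t : ℕ} {c : ℤ} {v v' : Datum}
    (h : E.State t c v) (h' : E.State t c v') : v = v' := by
  obtain ⟨J, w, hw, rfl, -⟩ := id h
  exact hE.state_death w J (h.along_of_le hw.1 hw.2 le_rfl) (h'.along_of_le hw.1 hw.2 le_rfl)

end Env

/-- The slots of `x` agree with the coordinates at time `t`. -/
def Aligned (x : Conf) (t : ℕ) : Prop := ∀ c s, x c = some s → s.1 = slot c t

/-- At most one content is proposed for each cell. -/
def ConflictFree (x : Conf) : Prop := ∀ c, {s | Pushed x c s}.Subsingleton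

/-- A sequence of configurations in which each arises from the preceding one by the rule. -/
def IsOrbit (X : ℕ → Conf) : Prop := ∀ t, X (t + 1) = step (X t)

section

variable {x : Conf} {t : ℕ}

theorem Sent.slot_eq (hx : Aligned x t) {l : Fin 7} {c : ℤ} {p : Slot} {v : Datum}
    (h : Sent x l c p v) : p = slot c (t + 1) := by
  obtain ⟨p', m, hp', rfl, -⟩ := h
  rw [show p' = slot (c - disp l) t from hx _ _ hp', slot_next]

theorem Pushed.exists_sent {c : ℤ} {s : Slot × Datum} (h : Pushed x c s) :
    ∃ l v, Sent x l c s.1 v := by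
  rcases h with ⟨l, -, h⟩ | ⟨v, -, h, -⟩
  exacts [⟨l, _, h⟩, ⟨5, v, h⟩]

theorem Pushed.slot_eq (hx : Aligned x t) {c : ℤ} {s : Slot × Datum} (h : Pushed x c s) :
    s.1 = slot c (t + 1) :=
  have ⟨_, _, hl⟩ := h.exists_sent
  hl.slot_eq hx

theorem Aligned.step (hx : Aligned x t) : Aligned (step x) (t + 1) :=
  fun c s hs ↦ (weakSucc_step x c s hs).slot_eq hx

theorem IsOrbit.aligned {X : ℕ → Conf} (hX : IsOrbit X) (h : Aligned (X 0) t) (n : ℕ) :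
    Aligned (X n) (t + n) := by
  induction n with
  | zero => exact h
  | succ n ih => exact hX n ▸ ih.step

theorem ConflictFree.step_eq_some_iff (hx : ConflictFree x) {c : ℤ} {s : Slot × Datum} :
    step x c = some s ↔ Pushed x c s :=
  _root_.SelfSimulation.step_eq_some_iff.trans <| and_iff_left_of_imp fun h _ h' ↦ hx c h' h

theorem pushed_iff_state {E : Env} (hx : Aligned x t) (ht : t < 49023)
    (hK : t = 7015 → ∀ J v, (E.key J v ↔ ∃ l, E.incr l J v))
    (hrow : ∀ c v, row x t c v ↔ E.State t c v) {c : ℤ} {s : Slot × Datum} :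
    Pushed x c s ↔ s.1 = slot c (t + 1) ∧ E.State (t + 1) c s.2 := by
  have h (v : Datum) : Pushed x c (slot c (t + 1), v) ↔ E.State (t + 1) c v := by
    rw [pushed_slot_iff ht, Push.congr hrow, push_state_iff hK]
  obtain ⟨a, v⟩ := s
  constructor
  · intro hs
    obtain rfl : a = slot c (t + 1) := hs.slot_eq hx
    exact ⟨rfl, (h v).1 hs⟩
  · rintro ⟨rfl, hs⟩
    exact (h v).2 hs

theorem conflictFree_of_state {E : Env} (hE : E.IsFunctional) (hx : Aligned x t) (ht : t < 49023)
    (hK : t = 7015 → ∀ J v, (E.key J v ↔ ∃ l, E.incr l J v))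
    (hrow : ∀ c v, row x t c v ↔ E.State t c v) : ConflictFree x := fun c s hs s' hs' ↦ by
  obtain ⟨ha, hs⟩ := (pushed_iff_state hx ht hK hrow).1 hs
  obtain ⟨ha', hs'⟩ := (pushed_iff_state hx ht hK hrow).1 hs'
  exact Prod.ext (ha.trans ha'.symm) (hE.state_unique hs hs')

theorem row_step_iff_state {E : Env} (hE : E.IsFunctional) (hx : Aligned x t) (ht : t < 49023)
    (hK : t = 7015 → ∀ J v, (E.key J v ↔ ∃ l, E.incr l J v))
    (hrow : ∀ c v, row x t c v ↔ E.State t c v) (c : ℤ) (v : Datum) :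
    row (step x) (t + 1) c v ↔ E.State (t + 1) c v := by
  rw [row, (conflictFree_of_state hE hx ht hK hrow).step_eq_some_iff,
    pushed_iff_state hx ht hK hrow, and_iff_right rfl]

end

namespace Env.Simulates

variable {E : Env} {y : Conf} {t : ℕ} (hE : E.Simulates y) (hy : Aligned y t)
include hE

theorem addr_unique {J : ℤ} : {v | E.addr J v}.Subsingleton := by
  rintro _ ⟨p, m, rfl, hp, hm⟩ _ ⟨p', m', rfl, hp', hm'⟩
  have h := (hE J p m).1 ⟨⟨p, m, rfl, hp, hm⟩, p, hp, hm⟩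
  have h' := (hE J p' m').1 ⟨⟨p', m', rfl, hp', hm'⟩, p', hp', hm'⟩
  rw [h] at h'
  simpa using congrArg Prod.fst (Option.some.inj h')

theorem datum_unique {J : ℤ} : {v | E.datum J v}.Subsingleton := by
  rintro m ⟨p, hp, hm⟩ m' ⟨p', hp', hm'⟩
  have h := (hE J p m).1 ⟨⟨p, m, rfl, hp, hm⟩, p, hp, hm⟩
  have h' := (hE J p' m').1 ⟨⟨p', m', rfl, hp', hm'⟩, p', hp', hm'⟩
  rw [h] at h'
  exact congrArg Prod.snd (Option.some.inj h')

theorem result_unique {l : Fin 7} {J : ℤ} : {v | E.result l J v}.Subsingleton := by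
  rintro v ⟨p, m, -, hp, hm, hv⟩ v' ⟨p', m', -, hp', hm', hv'⟩
  obtain rfl := Datum.plain.inj (hE.addr_unique hp hp')
  obtain rfl := hE.datum_unique hm hm'
  exact Option.some.inj (hv.symm.trans hv')

theorem incr_of_sent {l : Fin 7} {J : ℤ} {a : Slot} {v : Datum} (h : Sent y l J a v) :
    E.incr l J (.plain a) := by
  obtain ⟨p, m, hpm, rfl, -⟩ := h
  exact ⟨p, ((hE _ _ _).2 hpm).1, rfl⟩

include hy

theorem eq_of_incr {l : Fin 7} {J : ℤ} {v : Datum} (h : E.incr l J v) :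
    v = .plain (slot J (t + 1)) := by
  obtain ⟨p, ⟨p', m, hpp, hp, hm⟩, rfl⟩ := h
  obtain rfl : p = p' := Datum.plain.inj hpp
  have h := (hE _ p m).1 ⟨⟨p, m, rfl, hp, hm⟩, p, hp, hm⟩
  rw [show p = slot (J - disp l) t from hy _ _ h, slot_next]

theorem merge_key_unique {J : ℤ} : {v | E.merge.key J v}.Subsingleton :=
  fun _ ⟨_, h⟩ _ ⟨_, h'⟩ ↦ (hE.eq_of_incr hy h).trans (hE.eq_of_incr hy h').symm

theorem outcome_merge_iff {J : ℤ} {a : Slot} {v : Datum} :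
    E.merge.key J (.plain a) ∧ E.merge.outcome J v ↔ Pushed y J (a, v) := by
  have hout (h : E.merge.key J (.plain a)) : E.merge.outcome J v ↔ Pushed y J (a, v) :=
    outcome_iff_pushed (E := E.merge) hE fun _ ↦
      ⟨fun h' ↦ hE.merge_key_unique hy h' h, fun hv ↦ hv ▸ h⟩
  refine ⟨fun ⟨h, hv⟩ ↦ (hout h).1 hv, fun h ↦ ?_⟩
  obtain ⟨l, v', hl⟩ := h.exists_sent
  have hk : E.merge.key J (.plain a) := ⟨l, hE.incr_of_sent hl⟩
  exact ⟨hk, (hout hk).2 h⟩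

theorem isFunctional_merge (hC : ConflictFree y)
    (ha : ∀ J, {v | E.rawAddr J v}.Subsingleton) (hd : ∀ J, {v | E.rawDatum J v}.Subsingleton) :
    E.merge.IsFunctional where
  incr J := hE.merge_key_unique hy
  outcome J := by
    have hkey {v : Datum} (h : E.merge.outcome J v) : ∃ a, E.merge.key J (.plain a) := by
      rcases h with ⟨_, -, _, _, hk, -⟩ | ⟨_, _, ⟨_, _, hk, -⟩, -⟩ <;> exact ⟨_, hk⟩
    intro v h v' h'
    obtain ⟨a, hk⟩ := hkey h
    exact congrArg Prod.snd (hC J ((hE.outcome_merge_iff hy).1 ⟨hk, h⟩)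
      ((hE.outcome_merge_iff hy).1 ⟨hk, h'⟩))
  content w J := by
    have hkey := hE.merge_key_unique hy (J := J)
    have haddr (l : Fin 7) := hE.addr_unique (J := J - disp l)
    have hres (l : Fin 7) : {v | E.merge.result l J v}.Subsingleton :=
      Env.Simulates.result_unique (E := E.merge) hE
    cases w with
    | rawAddr => exact ha J
    | rawDatum => exact hd J
    | keepSig | starSig => exact fun _ h _ h' ↦ h.1.trans h'.1.symm
    | plainAddr => exact fun _ ⟨_, _, h⟩ _ ⟨_, _, h'⟩ ↦ ha J h h'
    | addr => exact hE.addr_unique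
    | datum => exact hE.datum_unique
    | incr l => exact fun _ h _ h' ↦ hkey ⟨l, h⟩ ⟨l, h'⟩
    | key | home => exact hkey
    | query l =>
      rintro _ ⟨p, h, rfl⟩ _ ⟨p', h', rfl⟩
      rw [Datum.plain.inj (hkey h h')]
    | exec l =>
      rintro _ ⟨p, -, h, rfl⟩ _ ⟨p', -, h', rfl⟩
      rw [Datum.plain.inj (haddr l h h')]
    | result l => exact hres l
    | joined =>
      rintro v ⟨v₁, v₂, h₁, h₂, hv⟩ v' ⟨v₁', v₂', h₁', h₂', hv'⟩
      obtain rfl := hres 5 h₁ h₁'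
      obtain rfl := hres 6 h₂ h₂'
      exact Option.some.inj (hv.symm.trans hv')

end Env.Simulates

/-- A configuration of the form in which a macro-cell stores the content of its simulated cell. -/
structure IsInitial (x : Conf) : Prop where
  aligned : Aligned x 0
  support {c : ℤ} {s : Slot × Datum} : x c = some s → ∃ J, c = 7000 * J ∨ c = 7000 * J + 7

theorem IsInitial.row_iff_state {X : ℕ → Conf} (h : IsInitial (X 0)) (c : ℤ) (v : Datum) :
    row (X 0) 0 c v ↔ (envOf X).merge.State 0 c v := by
  constructor
  · intro hv
    obtain ⟨J, rfl | rfl⟩ := h.support hv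
    exacts [state_rawAddr.2 hv, (state_rawDatum zero_le_one).2 hv]
  · rintro ⟨J, w, ⟨hb, -⟩, rfl, hv⟩
    cases w with
    | rawAddr => rwa [Wire.pos, add_zero]
    | rawDatum => exact hv
    | _ => simp [Wire.birth] at hb

theorem isFunctional_merge_envOf {X : ℕ → Conf} {t : ℕ} (hy : Aligned (decode (X 0)) t)
    (hC : ConflictFree (decode (X 0))) : (envOf X).merge.IsFunctional :=
  (simulates_decode X).isFunctional_merge hy hC (fun _ _ h _ h' ↦ row.unique h h')
    fun _ _ h _ h' ↦ row.unique h h'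

namespace IsOrbit

variable {X : ℕ → Conf} {t : ℕ} (hX : IsOrbit X) (h₀ : IsInitial (X 0))
  (hy : Aligned (decode (X 0)) t) (hC : ConflictFree (decode (X 0)))
include hX h₀ hy hC

theorem row_iff_state {n : ℕ} (hn : n ≤ 49023) (c : ℤ) (v : Datum) :
    row (X n) n c v ↔ (envOf X).merge.State n c v := by
  induction n generalizing c v with
  | zero => exact h₀.row_iff_state c v
  | succ n ih =>
    rw [hX n]
    exact row_step_iff_state (isFunctional_merge_envOf hy hC)
      (by simpa using hX.aligned h₀.aligned n) hn (fun _ _ _ ↦ Iff.rfl) (ih (by omega)) c v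

theorem conflictFree {n : ℕ} (hn : n < 49023) : ConflictFree (X n) :=
  conflictFree_of_state (isFunctional_merge_envOf hy hC) (by simpa using hX.aligned h₀.aligned n)
    hn (fun _ _ _ ↦ Iff.rfl) (hX.row_iff_state h₀ hy hC hn.le)

theorem isInitial_end : IsInitial (X 49023) where
  aligned := by
    have h := hX.aligned h₀.aligned 49023
    rwa [zero_add] at h
  support {c s} hs := by
    have ha : s.1 = slot c 49023 := by simpa using hX.aligned h₀.aligned 49023 c s hs
    exact exists_eq_of_state_end <| (hX.row_iff_state h₀ hy hC le_rfl c s.2).1 <| by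
      rw [row, hs, ← ha]

theorem decode_end : decode (X 49023) = step (decode (X 0)) := by
  funext J
  ext ⟨a, v⟩
  rw [decode_eq_some_iff, hC.step_eq_some_iff, ← (simulates_decode X).outcome_merge_iff hy,
    ← row_period, ← row_period, hX.row_iff_state h₀ hy hC le_rfl,
    hX.row_iff_state h₀ hy hC le_rfl, state_end_key, state_end_outcome]

end IsOrbit

/-! ### Persistence -/

theorem isOrbit_iterate (x : Conf) : IsOrbit fun t ↦ step^[t] x :=
  fun t ↦ Function.iterate_succ_apply' step t x

/-- A configuration which simulates `y`. -/
noncomputable def encode (y : Conf) : Conf := fun c ↦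
  if c % 7000 = 0 then (y (c / 7000)).map fun s ↦ (slot c 0, .plain s.1)
  else if c % 7000 = 7 then (y (c / 7000)).map fun s ↦ (slot c 0, s.2)
  else none

theorem isInitial_encode (y : Conf) : IsInitial (encode y) where
  aligned c s hs := by
    unfold encode at hs
    split_ifs at hs <;> obtain ⟨s', -, rfl⟩ := Option.map_eq_some_iff.1 hs <;> rfl
  support {c s} hs := by
    unfold encode at hs
    split_ifs at hs
    exacts [⟨c / 7000, by omega⟩, ⟨c / 7000, by omega⟩]

theorem decode_encode (y : Conf) : decode (encode y) = y := by
  funext J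
  ext ⟨p, m⟩
  have h₀ : encode y (7000 * J) = (y J).map fun s ↦ (slot (7000 * J) 0, .plain s.1) := by
    rw [encode, if_pos (by omega), show 7000 * J / 7000 = J by omega]
  have h₇ : encode y (7000 * J + 7) = (y J).map fun s ↦ (slot (7000 * J + 7) 0, s.2) := by
    rw [encode, if_neg (by omega), if_pos (by omega), show (7000 * J + 7) / 7000 = J by omega]
  rw [decode_eq_some_iff, row, row, h₀, h₇]
  cases y J <;> simp [Prod.ext_iff]

/-- Up to time `T`, a configuration evolves without conflicts, and it is not blank at time `T`. -/
structure Persists (x : Conf) (T : ℕ) : Prop where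
  conflictFree {t : ℕ} : t ≤ T → ConflictFree (step^[t] x)
  ne_blank : step^[T] x ≠ fun _ ↦ none

theorem conflictFree_of_subsingleton {x : Conf} (hx : {c | x c ≠ none}.Subsingleton) :
    ConflictFree x := by
  have heq {c c' : ℤ} {s s' : Slot × Datum} (h : x c = some s) (h' : x c' = some s') : c = c' :=
    hx (by simp [h]) (by simp [h'])
  have hlane {c : ℤ} {s : Slot × Datum} (h : Pushed x c s) :
      ∃ l : Fin 7, l.val < 5 ∧ Sent x l c s.1 s.2 := by
    rcases h with h | ⟨_, _, ⟨_, _, h₅, -⟩, ⟨_, _, h₆, -⟩, -⟩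
    · exact h
    · have := heq h₅ h₆
      simp only [show disp 5 = 7 from rfl, show disp 6 = 0 from rfl] at this
      omega
  have hdisp : ∀ l l' : Fin 7, l.val < 5 → l'.val < 5 → disp l = disp l' → l = l' := by decide
  intro c s hs s' hs'
  obtain ⟨l, hl, p, m, hpm, hp, hv⟩ := hlane hs
  obtain ⟨l', hl', p', m', hpm', hp', hv'⟩ := hlane hs'
  obtain rfl := hdisp l l' hl hl' (by have := heq hpm hpm'; omega)
  obtain ⟨rfl, rfl⟩ : p = p' ∧ m = m' := by simpa [hpm] using hpm'
  exact Prod.ext (hp.symm.trans hp') (Option.some.inj (hv.symm.trans hv'))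

theorem exists_persists_zero : ∃ x, Aligned x 0 ∧ Persists x 0 := by
  let x : Conf := Function.update (fun _ ↦ none) 0 (some (slot 0 0, .star))
  have hx {c : ℤ} (h : x c ≠ none) : c = 0 := by
    by_contra hc
    simp [x, hc] at h
  refine ⟨x, fun c s h ↦ ?_, fun ht ↦ ?_, fun h ↦ ?_⟩
  · obtain rfl : c = 0 := hx (by simp [h])
    rw [← Option.some.inj h]
  · obtain rfl := Nat.le_zero.1 ht
    exact conflictFree_of_subsingleton fun c h c' h' ↦ (hx h).trans (hx h').symm
  · simpa [x] using congrFun h 0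

section

variable {x : Conf} {t T : ℕ} (hx : IsInitial x) (hy : Aligned (decode x) t)
include hx hy

theorem isInitial_and_decode_iterate (hC : ∀ n < T, ConflictFree (step^[n] (decode x))) :
    IsInitial (step^[49023 * T] x) ∧ decode (step^[49023 * T] x) = step^[T] (decode x) := by
  induction T with
  | zero => exact ⟨hx, rfl⟩
  | succ T ih =>
    obtain ⟨hi, hd⟩ := ih fun n hn ↦ hC n (by omega)
    have hX := isOrbit_iterate (step^[49023 * T] x)
    have ha : Aligned (decode (step^[49023 * T] x)) (t + T) :=
      hd ▸ (isOrbit_iterate (decode x)).aligned hy T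
    have hc : ConflictFree (decode (step^[49023 * T] x)) := hd ▸ hC T T.lt_succ_self
    rw [mul_add_one, add_comm, Function.iterate_add_apply, Function.iterate_succ_apply' step T,
      ← hd]
    exact ⟨hX.isInitial_end hi ha hc, hX.decode_end hi ha hc⟩

theorem Persists.of_decode (h : Persists (decode x) T) : Persists x (49023 * T + 1) where
  conflictFree {n} hn := by
    obtain ⟨hi, hd⟩ := isInitial_and_decode_iterate (T := n / 49023) hx hy
      fun i hi ↦ h.conflictFree (by omega)
    rw [← Nat.mod_add_div n 49023, Function.iterate_add_apply]
    exact (isOrbit_iterate _).conflictFree hi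
      (hd ▸ (isOrbit_iterate (decode x)).aligned hy _) (hd ▸ h.conflictFree (by omega))
      (Nat.mod_lt _ (by norm_num))
  ne_blank := by
    obtain ⟨hi, hd⟩ := isInitial_and_decode_iterate (T := T) hx hy
      fun i hi ↦ h.conflictFree hi.le
    obtain ⟨J, hJ⟩ := Function.ne_iff.1 h.ne_blank
    obtain ⟨s, hs⟩ := Option.ne_none_iff_exists'.1 hJ
    have hm : row (step^[49023 * T] x) 0 (7000 * J + 7) s.2 := (decode_eq_some_iff.1 (hd ▸ hs)).2
    have hrow := ((isOrbit_iterate (step^[49023 * T] x)).row_iff_state hi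
      (hd ▸ (isOrbit_iterate (decode x)).aligned hy _) (hd ▸ h.conflictFree le_rfl)
      (n := 1) (by norm_num) _ _).2 ((Env.state_rawDatum le_rfl).2 hm)
    rw [add_comm, Function.iterate_add_apply]
    exact fun h ↦ nomatch (congrFun h _).symm.trans hrow

end

theorem exists_iterate_step_ne (n : ℕ) : ∃ x, step^[n] x ≠ fun _ ↦ none := by
  suffices h : ∃ x T, n ≤ T ∧ Aligned x 0 ∧ Persists x T by
    obtain ⟨x, T, hT, -, h⟩ := h
    refine ⟨step^[T - n] x, ?_⟩
    rw [← Function.iterate_add_apply, Nat.add_sub_cancel' hT]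
    exact h.ne_blank
  induction n with
  | zero => exact ⟨_, 0, le_rfl, exists_persists_zero.choose_spec⟩
  | succ n ih =>
    obtain ⟨y, T, hT, hy, h⟩ := ih
    rw [← decode_encode y] at hy h
    exact ⟨encode y, 49023 * T + 1, by omega, (isInitial_encode y).aligned,
      h.of_decode (isInitial_encode y) hy⟩

/-! ### Densities in space and time -/

theorem continuous_of_dependsOn {ι α β : Type*} [TopologicalSpace α] [DiscreteTopology α]
    [TopologicalSpace β] [Nonempty β] {f : (ι → α) → β} {s : Set ι} [Finite s]
    (hf : DependsOn f s) : Continuous f := by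
  obtain ⟨g, rfl⟩ := (dependsOn_iff_exists_comp (α := fun _ ↦ α)).1 hf
  exact continuous_of_discreteTopology.comp (Pi.continuous_domRestrict s)

theorem besicovitchDist_le {α : Type} [DecidableEq α] {x y : ℤ → α} {ε C : ℝ}
    (h : ∀ r : ℕ, (((Finset.Icc (-(r : ℤ)) r).filter fun i ↦ x i ≠ y i).card : ℝ) ≤
      ε * (2 * r + 1) + C) : besicovitchDist x y ≤ ε := by
  have hlim : Tendsto (fun r : ℕ ↦ ε + C / (2 * (r : ℝ) + 1)) atTop (nhds ε) := by
    have hr : Tendsto (fun r : ℕ ↦ 2 * (r : ℝ) + 1) atTop atTop :=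
      tendsto_atTop_add_const_right _ _ (tendsto_natCast_atTop_atTop.const_mul_atTop two_pos)
    simpa using (hr.const_div_atTop C).const_add ε
  rw [← hlim.limsup_eq]
  refine limsup_le_limsup (Eventually.of_forall fun r ↦ ?_) ?_ hlim.isBoundedUnder_le
  · have hr : (0 : ℝ) < 2 * r + 1 := by positivity
    have := (div_le_div_iff_of_pos_right hr).2 (h r)
    rwa [add_div, mul_div_cancel_right₀ _ hr.ne'] at this
  · exact (isBoundedUnder_of ⟨0, fun r ↦ by positivity⟩ :
      IsBoundedUnder (· ≥ ·) atTop _).isCoboundedUnder_le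

section InvariantMeasure

variable {Ω : Type*} [MeasurableSpace Ω] {μ : Measure Ω} [IsProbabilityMeasure μ]

theorem eq_dirac_of_ae_eq {a : Ω} (h : ∀ᵐ z ∂μ, z = a) : μ = Measure.dirac a := by
  have hmap : μ.map id = μ.map fun _ ↦ a := Measure.map_congr h
  rwa [Measure.map_id, Measure.map_const, measure_univ, one_smul] at hmap

/-- The expected number of visits to `A` at the times `k, …, k + n - 1` is `n * μ A`. -/
theorem measureReal_le_of_visits_le {Φ : Ω → Ω} (hΦ : MeasurePreserving Φ μ μ) {A : Set Ω}
    [DecidablePred (· ∈ A)] (hA : MeasurableSet A) {ε : ℝ} {k n : ℕ} (hn : 0 < n)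
    (h : ∀ z, (((Finset.range n).filter fun i ↦ Φ^[k + i] z ∈ A).card : ℝ) ≤ ε * n) :
    μ.real A ≤ ε := by
  have hpre (i : ℕ) : MeasurableSet (Φ^[k + i] ⁻¹' A) := (hΦ.iterate _).measurable hA
  have hreal (i : ℕ) : μ.real (Φ^[k + i] ⁻¹' A) = μ.real A :=
    (hΦ.iterate _).measureReal_preimage hA.nullMeasurableSet
  have hint (i : ℕ) : Integrable ((Φ^[k + i] ⁻¹' A).indicator (1 : Ω → ℝ)) μ :=
    (integrable_const 1).indicator (hpre i)
  have hvisits (z : Ω) : ∑ i ∈ Finset.range n, (Φ^[k + i] ⁻¹' A).indicator (1 : Ω → ℝ) z =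
      ((Finset.range n).filter fun i ↦ Φ^[k + i] z ∈ A).card := by
    rw [Finset.natCast_card_filter]
    exact Finset.sum_congr rfl fun i _ ↦ by by_cases hi : Φ^[k + i] z ∈ A <;> simp [hi]
  refine le_of_mul_le_mul_right ?_ (Nat.cast_pos.2 hn)
  calc μ.real A * n
      = ∑ i ∈ Finset.range n, μ.real (Φ^[k + i] ⁻¹' A) := by
        rw [Finset.sum_congr rfl fun i _ ↦ hreal i, Finset.sum_const, Finset.card_range,
          nsmul_eq_mul, mul_comm]
    _ = ∫ z, ∑ i ∈ Finset.range n, (Φ^[k + i] ⁻¹' A).indicator (1 : Ω → ℝ) z ∂μ := by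
        rw [integral_finsetSum _ fun i _ ↦ hint i]
        exact Finset.sum_congr rfl fun i _ ↦ (integral_indicator_one (hpre i)).symm
    _ ≤ ∫ _, ε * n ∂μ :=
        integral_mono (integrable_finsetSum _ fun i _ ↦ hint i) (integrable_const _) fun z ↦
          (hvisits z).trans_le (h z)
    _ = ε * n := by simp

end InvariantMeasure

theorem existsUnique_invariant_measure {ι α : Type*} [Countable ι] [MeasurableSpace α]
    [MeasurableSingletonClass α] [DecidableEq α] {Φ : (ι → α) → ι → α} (hΦ : Measurable Φ) {B : α}
    (hB : Φ (fun _ ↦ B) = fun _ ↦ B)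
    (h : ∀ c, ∀ ε : ℝ, 0 < ε → ∃ k n, 0 < n ∧
      ∀ z, (((Finset.range n).filter fun i ↦ Φ^[k + i] z c ≠ B).card : ℝ) ≤ ε * n) :
    ∃! μ : Measure (ι → α), IsProbabilityMeasure μ ∧
      ∀ A : Set (ι → α), MeasurableSet A → μ (Φ ⁻¹' A) = μ A := by
  refine ⟨Measure.dirac fun _ ↦ B, ⟨inferInstance, fun A hA ↦ ?_⟩, fun μ ⟨_, hμ⟩ ↦ ?_⟩
  · rw [← Measure.map_apply hΦ hA, Measure.map_dirac' hΦ, hB]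
  · have hpres : MeasurePreserving Φ μ μ :=
      ⟨hΦ, Measure.ext fun A hA ↦ by rw [Measure.map_apply hΦ hA, hμ A hA]⟩
    have hnull (c : ι) : μ {z | z c ≠ B} = 0 := by
      rw [← measureReal_eq_zero_iff]
      refine le_antisymm (le_of_forall_pos_le_add fun ε hε ↦ ?_) measureReal_nonneg
      obtain ⟨k, n, hn, hvisits⟩ := h c ε hε
      rw [zero_add]
      have hA : MeasurableSet {z : ι → α | z c = B} :=
        (measurableSet_singleton B).preimage (measurable_pi_apply c)
      exact measureReal_le_of_visits_le hpres hA.compl hn hvisits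
    refine eq_dirac_of_ae_eq ?_
    filter_upwards [ae_all_iff.2 hnull] with z hz using funext hz

/-! ### The automaton -/

theorem step_translate (x : Conf) (a : ℤ) : step (fun i ↦ x (i + a)) = fun i ↦ step x (i + a) := by
  have h (c : ℤ) (s : Slot × Datum) : Pushed (fun i ↦ x (i + a)) c s ↔ Pushed x (c + a) s := by
    simp only [Pushed, Sent, sub_add_eq_add_sub]
  funext c
  ext s
  simp only [step_eq_some_iff, h]

theorem dependsOn_step (c : ℤ) : DependsOn (fun x : Conf ↦ step x c) (Set.Icc (c - 7) (c + 7)) := by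
  intro x y hxy
  have hdisp (l : Fin 7) : x (c - disp l) = y (c - disp l) := by
    have := disp_bounds l
    exact hxy _ ⟨by omega, by omega⟩
  ext s
  simp only [step_eq_some_iff, Pushed, Sent, hdisp]

theorem isHistory_iterate (x : Conf) : IsHistory fun t ↦ step^[t] x :=
  fun t ↦ isOrbit_iterate x t ▸ weakSucc_step (step^[t] x)

theorem step_blank : step (fun _ ↦ none) = fun _ ↦ none := by
  ext c s
  simp [step_eq_some_iff, Pushed, Sent]

section Automaton

variable {m : ℕ} (e : Cell ≃ Fin (m + 1))

/-- The rule `step` on the alphabet `Fin (m + 1)`, composed with a shift which is faster than every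
signal: then a cell of this automaton does not follow any signal. -/
noncomputable def automaton (z : ℤ → Fin (m + 1)) : ℤ → Fin (m + 1) :=
  fun c ↦ e (step (fun i ↦ e.symm (z i)) (c + 14))

theorem automaton_translate (z : ℤ → Fin (m + 1)) :
    automaton e (fun i ↦ z (i + 1)) = fun i ↦ automaton e z (i + 1) := by
  funext c
  rw [automaton, automaton, step_translate fun i ↦ e.symm (z i), add_right_comm]

theorem automaton_blank : automaton e (fun _ ↦ e none) = fun _ ↦ e none := by
  funext c
  simp only [automaton, Equiv.symm_apply_apply, step_blank]

theorem continuous_automaton : Continuous (automaton e) := by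
  refine continuous_pi fun c ↦ continuous_of_dependsOn (s := Set.Icc (c + 14 - 7) (c + 14 + 7)) ?_
  intro x y hxy
  exact congrArg e (dependsOn_step (c + 14) fun i hi ↦ congrArg e.symm (hxy i hi))

theorem iterate_automaton (n : ℕ) (z : ℤ → Fin (m + 1)) (c : ℤ) :
    (automaton e)^[n] z c = e (step^[n] (fun i ↦ e.symm (z i)) (c + 14 * n)) := by
  induction n generalizing c with
  | zero => simp
  | succ n ih =>
    simp only [Function.iterate_succ_apply', automaton, ih, Equiv.symm_apply_apply]
    rw [step_translate]
    dsimp only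
    rw [Nat.cast_succ, mul_add_one, add_comm (14 * _), add_assoc]

theorem iterate_automaton_ne_iff {n : ℕ} {z : ℤ → Fin (m + 1)} {c : ℤ} :
    (automaton e)^[n] z c ≠ e none ↔ step^[n] (fun i ↦ e.symm (z i)) (c + 14 * n) ≠ none := by
  rw [iterate_automaton, e.injective.ne_iff]

theorem exists_iterate_automaton_ne (n : ℕ) : ∃ z, (automaton e)^[n] z ≠ fun _ ↦ e none := by
  obtain ⟨x, hx⟩ := exists_iterate_step_ne n
  obtain ⟨c, hc⟩ := Function.ne_iff.1 hx
  refine ⟨fun i ↦ e (x i), Function.ne_iff.2 ⟨c - 14 * n, (iterate_automaton_ne_iff e).2 ?_⟩⟩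
  simpa using hc

theorem card_space_le (z : ℤ → Fin (m + 1)) (N r : ℕ) :
    (((Finset.Icc (-(r : ℤ)) r).filter fun i ↦
      (automaton e)^[4 * 49023 ^ N] z i ≠ e none).card : ℝ) ≤
      8 * (2352 / 7000) ^ N * (2 * r + 1) + 256 * 2352 ^ N := by
  generalize hn : 4 * 49023 ^ N = n
  let cell (i : ℤ) : ℤ × ℕ := (i + 14 * n, n)
  have hcell : cell.Injective := fun i j h ↦ add_right_cancel (congrArg Prod.fst h)
  have h := card_le_of_ne_none (isHistory_iterate fun i ↦ e.symm (z i)) (.inl rfl) (g := 14 * n)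
    (u := -r + 14 * n) (w := r + 14 * n) (N := N) (F := Finset.image cell
      ((Finset.Icc (-(r : ℤ)) r).filter fun i ↦ (automaton e)^[n] z i ≠ e none)) (by
      simp only [Finset.forall_mem_image, Finset.mem_filter, Finset.mem_Icc, and_imp]
      intro i hr hr' hi
      exact ⟨(iterate_automaton_ne_iff e).1 hi, by simp [cell], add_le_add_left hr _,
        add_le_add_left hr' _, hn.le⟩) (by omega)
  rw [Finset.card_image_of_injective _ hcell] at h
  refine h.trans ?_
  push_cast
  rw [div_pow]
  have : (0 : ℝ) ≤ 2352 ^ N / 7000 ^ N := by positivity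
  calc 8 * 2352 ^ N * ((r + 14 * n - (-r + 14 * n)) / 7000 ^ N + 32)
      = 8 * (2352 ^ N / 7000 ^ N) * (2 * r : ℝ) + 256 * 2352 ^ N := by ring
    _ ≤ 8 * (2352 ^ N / 7000 ^ N) * (2 * r + 1) + 256 * 2352 ^ N := by gcongr; linarith

theorem card_time_le (z : ℤ → Fin (m + 1)) (N : ℕ) (c : ℤ) :
    (((Finset.range (49023 ^ N)).filter fun i ↦
      (automaton e)^[4 * 49023 ^ N + i] z c ≠ e none).card : ℝ) ≤
      368 * (2352 / 7000) ^ N * (49023 ^ N : ℕ) := by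
  generalize hn : 4 * 49023 ^ N = n
  let cell (i : ℕ) : ℤ × ℕ := (c + 14 * (n + i : ℕ), n + i)
  have hcell : cell.Injective := fun i j h ↦ add_left_cancel (congrArg Prod.snd h)
  have h := card_le_of_ne_none (isHistory_iterate fun i ↦ e.symm (z i)) (.inr rfl) (g := -c)
    (u := c + 14 * n) (w := c + 14 * n + 14 * (49023 ^ N : ℕ)) (N := N)
    (F := Finset.image cell ((Finset.range (49023 ^ N)).filter
      fun i ↦ (automaton e)^[n + i] z c ≠ e none)) (by
      simp only [Finset.forall_mem_image, Finset.mem_filter, Finset.mem_range, and_imp]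
      intro i hr hi
      refine ⟨(iterate_automaton_ne_iff e).1 hi, ?_, ?_, ?_, ?_⟩ <;> dsimp only [cell] <;> omega)
    (by omega)
  rw [Finset.card_image_of_injective _ hcell] at h
  refine h.trans ?_
  have hpow : (1 : ℝ) ≤ 49023 ^ N / 7000 ^ N := by
    rw [one_le_div (by positivity)]
    gcongr
    norm_num
  push_cast
  calc 8 * (2352 : ℝ) ^ N * ((c + 14 * n + 14 * 49023 ^ N - (c + 14 * n)) / 7000 ^ N + 32)
      = 8 * (2352 : ℝ) ^ N * (14 * (49023 ^ N / 7000 ^ N) + 32 * 1) := by ring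
    _ ≤ 8 * (2352 : ℝ) ^ N * (14 * (49023 ^ N / 7000 ^ N) + 32 * (49023 ^ N / 7000 ^ N)) := by
        gcongr
    _ = 368 * (2352 / 7000) ^ N * 49023 ^ N := by rw [div_pow]; ring

theorem exists_besicovitchDist_lt {ε : ℝ} (hε : 0 < ε) :
    ∃ n, ∀ z, besicovitchDist ((automaton e)^[n] z) (fun _ ↦ e none) < ε := by
  obtain ⟨N, hN⟩ := exists_pow_lt_of_lt_one (show 0 < ε / 8 by positivity)
    (show (2352 / 7000 : ℝ) < 1 by norm_num)
  exact ⟨4 * 49023 ^ N, fun z ↦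
    (besicovitchDist_le fun r ↦ card_space_le e z N r).trans_lt (by linarith)⟩

theorem existsUnique_invariant_measure_automaton :
    ∃! μ : Measure (ℤ → Fin (m + 1)), IsProbabilityMeasure μ ∧
      ∀ A : Set (ℤ → Fin (m + 1)), MeasurableSet A → μ (automaton e ⁻¹' A) = μ A := by
  refine existsUnique_invariant_measure (continuous_automaton e).measurable (automaton_blank e)
    fun c ε hε ↦ ?_
  obtain ⟨N, hN⟩ := exists_pow_lt_of_lt_one (show 0 < ε / 368 by positivity)
    (show (2352 / 7000 : ℝ) < 1 by norm_num)
  refine ⟨4 * 49023 ^ N, 49023 ^ N, by positivity, fun z ↦ (card_time_le e z N c).trans ?_⟩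
  gcongr
  linarith

end Automaton

instance : Finite Datum :=
  .of_injective (β := Slot ⊕ Fin 7 × Slot ⊕ Fin 7 × Slot ⊕ Bool)
    (fun
      | .plain p => .inl p
      | .query l p => .inr (.inl (l, p))
      | .exec l p => .inr (.inr (.inl (l, p)))
      | .keep => .inr (.inr (.inr false))
      | .star => .inr (.inr (.inr true)))
    fun v v' h ↦ by cases v <;> cases v' <;> simp_all

theorem exists_cell_equiv : ∃ m : ℕ, Nonempty (Cell ≃ Fin (m + 1)) := by
  obtain ⟨n, ⟨e⟩⟩ := Finite.exists_equiv_fin Cell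
  cases n with
  | zero => exact (e none).elim0
  | succ m => exact ⟨m, ⟨e⟩⟩

end SelfSimulation

/-- There exists a cellular automaton with a quiescent state which is
uniquely ergodic and asymptotically nilpotent in density, but not nilpotent. -/
theorem exists_uniquelyErgodic_AND_not_nilpotent_CA :
    ∃ (m : ℕ) (B : Fin (m + 1)) (Φ : (ℤ → Fin (m + 1)) → (ℤ → Fin (m + 1))),
      Continuous Φ ∧
      (∀ x : ℤ → Fin (m + 1), Φ (fun i => x (i + 1)) = fun i => Φ x (i + 1)) ∧
      Φ (fun _ => B) = (fun _ => B) ∧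
      (∃! μ : Measure (ℤ → Fin (m + 1)), IsProbabilityMeasure μ ∧
          ∀ A : Set (ℤ → Fin (m + 1)), MeasurableSet A → μ (Φ ⁻¹' A) = μ A) ∧
      (∀ ε : ℝ, 0 < ε → ∃ n : ℕ, ∀ x : ℤ → Fin (m + 1),
          besicovitchDist (Φ^[n] x) (fun _ => B) < ε) ∧
      ¬ (∃ n : ℕ, ∀ x : ℤ → Fin (m + 1), Φ^[n] x = fun _ => B) := by
  obtain ⟨m, ⟨e⟩⟩ := SelfSimulation.exists_cell_equiv
  refine ⟨m, e none, SelfSimulation.automaton e, SelfSimulation.continuous_automaton e,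
    SelfSimulation.automaton_translate e, SelfSimulation.automaton_blank e,
    SelfSimulation.existsUnique_invariant_measure_automaton e,
    fun ε hε ↦ SelfSimulation.exists_besicovitchDist_lt e hε, fun ⟨n, hn⟩ ↦ ?_⟩
  obtain ⟨z, hz⟩ := SelfSimulation.exists_iterate_automaton_ne e n
  exact hz (hn z)
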